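/- There exist a finitely presented group G which has no subgroup isomorphic to the Baumslag–Solitar group BS(m,n) for any nonzero integers m and n (in particular no subgroup isomorphic to ℤ × ℤ), and a surjective group homomorphism φ : G → ℤ, such that the kernel of φ is finitely presented but is not of type FP₃ over ℤ. -/

import Mathlib

/-- The augmentation ring homomorphism `ℤH → ℤ` sending each group element to `1`. -/
noncomputable def augmentationMap (H : Type) [Group H] : MonoidAlgebra ℤ H →+* ℤ :=
  (MonoidAlgebra.lift ℤ ℤ H 1).toRingHom

/-- A group `H` is of type `FP₂` over `ℤ`: there is an exact sequence
`P₂ → P₁ → P₀ → ℤ → 0` of `ℤH`-modules with each `Pᵢ` finitely generated projective,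
where `ℤ` carries the trivial `H`-action (via the augmentation map). -/
def IsTypeFP2 (H : Type) [Group H] : Prop :=
  letI : Module (MonoidAlgebra ℤ H) ℤ := Module.compHom ℤ (augmentationMap H)
  ∃ (P₂ P₁ P₀ : Type) (_ : AddCommGroup P₂) (_ : AddCommGroup P₁) (_ : AddCommGroup P₀)
    (_ : Module (MonoidAlgebra ℤ H) P₂) (_ : Module (MonoidAlgebra ℤ H) P₁)
    (_ : Module (MonoidAlgebra ℤ H) P₀),
    Module.Finite (MonoidAlgebra ℤ H) P₂ ∧ Module.Projective (MonoidAlgebra ℤ H) P₂ ∧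
    Module.Finite (MonoidAlgebra ℤ H) P₁ ∧ Module.Projective (MonoidAlgebra ℤ H) P₁ ∧
    Module.Finite (MonoidAlgebra ℤ H) P₀ ∧ Module.Projective (MonoidAlgebra ℤ H) P₀ ∧
    ∃ (d₂ : P₂ →ₗ[MonoidAlgebra ℤ H] P₁) (d₁ : P₁ →ₗ[MonoidAlgebra ℤ H] P₀)
      (ε : P₀ →ₗ[MonoidAlgebra ℤ H] ℤ),
      Function.Surjective ε ∧
      LinearMap.range d₁ = LinearMap.ker ε ∧
      LinearMap.range d₂ = LinearMap.ker d₁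

/-- A group `H` is finitely presented: it is isomorphic to a presented group
`⟨x₁,…,xₙ | R⟩` with `R` a finite set of relators. -/
def IsFinitelyPresented (H : Type) [Group H] : Prop :=
  ∃ (n : ℕ) (R : Set (FreeGroup (Fin n))), R.Finite ∧ Nonempty (H ≃* PresentedGroup R)

/-- The single relator `y⁻¹ xᵐ y x⁻ⁿ` of the Baumslag–Solitar group `BS(m,n)`. -/
def BSRels (m n : ℤ) : Set (FreeGroup (Fin 2)) :=
  {(FreeGroup.of 1)⁻¹ * (FreeGroup.of 0) ^ m * FreeGroup.of 1 * (FreeGroup.of 0) ^ (-n)}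

/-- The Baumslag–Solitar group `BS(m,n) = ⟨x, y | y⁻¹xᵐyx⁻ⁿ⟩`. -/
abbrev BS (m n : ℤ) : Type := PresentedGroup (BSRels m n)

/-- `G` has no subgroup isomorphic to a Baumslag–Solitar group `BS(m,n)`
with `m, n` nonzero. -/
def HasNoBSSubgroup (G : Type) [Group G] : Prop :=
  ∀ m n : ℤ, m ≠ 0 → n ≠ 0 → ∀ K : Subgroup G, ¬ Nonempty (K ≃* BS m n)

/-- A group `H` is of type `FP₃` over `ℤ`: there is an exact sequence
`P₃ → P₂ → P₁ → P₀ → ℤ → 0` of `ℤH`-modules with each `Pᵢ` finitely generated projective,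
where `ℤ` carries the trivial `H`-action (via the augmentation map). -/
def IsTypeFP3 (H : Type) [Group H] : Prop :=
  letI : Module (MonoidAlgebra ℤ H) ℤ := Module.compHom ℤ (augmentationMap H)
  ∃ (P₃ P₂ P₁ P₀ : Type)
    (_ : AddCommGroup P₃) (_ : AddCommGroup P₂) (_ : AddCommGroup P₁) (_ : AddCommGroup P₀)
    (_ : Module (MonoidAlgebra ℤ H) P₃) (_ : Module (MonoidAlgebra ℤ H) P₂)
    (_ : Module (MonoidAlgebra ℤ H) P₁) (_ : Module (MonoidAlgebra ℤ H) P₀),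
    Module.Finite (MonoidAlgebra ℤ H) P₃ ∧ Module.Projective (MonoidAlgebra ℤ H) P₃ ∧
    Module.Finite (MonoidAlgebra ℤ H) P₂ ∧ Module.Projective (MonoidAlgebra ℤ H) P₂ ∧
    Module.Finite (MonoidAlgebra ℤ H) P₁ ∧ Module.Projective (MonoidAlgebra ℤ H) P₁ ∧
    Module.Finite (MonoidAlgebra ℤ H) P₀ ∧ Module.Projective (MonoidAlgebra ℤ H) P₀ ∧
    ∃ (d₃ : P₃ →ₗ[MonoidAlgebra ℤ H] P₂) (d₂ : P₂ →ₗ[MonoidAlgebra ℤ H] P₁)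
      (d₁ : P₁ →ₗ[MonoidAlgebra ℤ H] P₀) (ε : P₀ →ₗ[MonoidAlgebra ℤ H] ℤ),
      Function.Surjective ε ∧
      LinearMap.range d₁ = LinearMap.ker ε ∧
      LinearMap.range d₂ = LinearMap.ker d₁ ∧
      LinearMap.range d₃ = LinearMap.ker d₂

/-!
Let `k = 𝔽₁₉`, let `t₀, …, t₈` be the ninth roots of unity in `k`, and let `R` be the polynomial
ring `k[X₀, X₁, X₂, X₃]` with the linear forms `Lᵢ = X₀ + tᵢ X₁ + tᵢ² X₂ + tᵢ³ X₃` inverted. The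
group `ℤ⁹` acts on `R³` through the scalars `q(κ) = ∏ Lᵢ ^ κᵢ`, and `G ≤ R³ ⋊ ℤ⁹` is generated by
elements `gᵢ = (wᵢ, eᵢ - e₀)` chosen such that `v₁ X₁ + v₂ X₂ + v₃ X₃ = q(κ) - 1` for all `(v, κ)`
in `G`. The map `φ` is `κ₇ - κ₈`.

* Any four of the `Lᵢ` span all of them, so the conjugate of a commutator by one generator is a
  product of conjugates by any four others. By induction on the length of words, finitely many
  commutation relations force the commutator subgroup to be abelian, and finitely generated
  metabelian groups satisfy the maximal condition on normal subgroups. The kernel of `φ` is treated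
  in the same way with `g₇ g₈` in place of `g₇`, `g₈`.
* If commuting `g`, `h` had independent exponents, `q(g) - 1` and `q(h) - 1` would be coprime in the
  unique factorisation domain `R`, so `q(g) - 1` would divide the translation part of `g` and `1`
  would lie in the ideal `(X₁, X₂, X₃)`. As the elements with exponent `0` have order dividing `19`,
  this excludes `ℤ × ℤ` and the Baumslag–Solitar groups.
* The specialisations `X ↦ (-a c, 0, 0, 1)` in `k(c)`, for the cube roots of unity `a`, yield three
  characters with product `1`, hence crossed homomorphisms whose cup product has trivial
  coefficients. Under `FP₃` its values on commuting triples of elements with exponent `0`, which are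
  `3 × 3` determinants, would lie in a finitely generated, hence finite, additive subgroup of
  `k(c)`; but they include `(1 - c³) ^ (-3 n) z` for some `z ≠ 0` and all `n`.
-/

/-! ### Groups in which conjugates commute -/

section CommutingConjugates

open Subgroup
open scoped commutatorElement

variable {Γ A I : Type*} [Group Γ]

lemma commute_of_mem_closure {S : Set Γ} {y z : Γ} (hy : y ∈ closure S)
    (h : ∀ s ∈ S, Commute s z) : Commute y z :=
  mem_centralizer_singleton_iff.1 <|
    (closure_le _).2 (fun s hs ↦ mem_centralizer_singleton_iff.2 (h s hs)) hy

lemma commute_of_mem_closure_of_mem_closure {S T : Set Γ} {y z : Γ} (hy : y ∈ closure S)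
    (hz : z ∈ closure T) (h : ∀ s ∈ S, ∀ t ∈ T, Commute s t) : Commute y z :=
  commute_of_mem_closure hy fun s hs ↦
    (commute_of_mem_closure hz fun t ht ↦ (h s hs t ht).symm).symm

lemma commute_map_of_mem_closure (σ : MulAut Γ) {S : Set Γ} {y z : Γ} (hy : y ∈ closure S)
    (h : ∀ s ∈ S, Commute (σ s) z) : Commute (σ y) z := by
  refine commute_of_mem_closure (S := σ '' S) ?_ (Set.forall_mem_image.2 h)
  rw [← MulEquiv.coe_toMonoidHom, ← MonoidHom.map_closure]
  exact mem_map_of_mem _ hy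

/-- The weight of a word, the sum of the weights `deg a` of its letters. -/
def wordWeight (deg : A → ℕ) (w : List A) : ℕ := (w.map deg).sum

section wordWeight

variable (deg : A → ℕ)

@[simp] lemma wordWeight_nil : wordWeight deg [] = 0 := rfl

@[simp] lemma wordWeight_cons (a : A) (w : List A) :
    wordWeight deg (a :: w) = deg a + wordWeight deg w := by
  simp [wordWeight]

@[simp] lemma wordWeight_append (v w : List A) :
    wordWeight deg (v ++ w) = wordWeight deg v + wordWeight deg w := by
  simp [wordWeight]

lemma wordWeight_map_eq_length {b : I → A} (hb : ∀ i, deg (b i) = 1) (u : List I) :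
    wordWeight deg (u.map b) = u.length := by
  simp [wordWeight, Function.comp_def, hb]

variable {deg} in
lemma wordWeight_eq_of_perm {v w : List A} (h : v.Perm w) : wordWeight deg v = wordWeight deg w :=
  (h.map deg).sum_eq

variable {deg} in
lemma length_le_wordWeight (h : ∀ a, 0 < deg a) (w : List A) : w.length ≤ wordWeight deg w := by
  induction w with
  | nil => simp
  | cons a w ih =>
    have := h a
    simp only [List.length_cons, wordWeight_cons]
    lia

end wordWeight

/-- Conjugation by the value of a word whose letters stand for the elements `x a`. -/
def conjWord (x : A → Γ) (w : List A) : MulAut Γ := MulAut.conj (w.map x).prod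

section conjWord

variable (x : A → Γ)

lemma conjWord_apply (w : List A) (c : Γ) :
    conjWord x w c = (w.map x).prod * c * (w.map x).prod⁻¹ := rfl

@[simp] lemma conjWord_nil (c : Γ) : conjWord x [] c = c := by simp [conjWord]

lemma conjWord_append (v w : List A) (c : Γ) :
    conjWord x (v ++ w) c = conjWord x v (conjWord x w c) := by
  simp [conjWord]

lemma conjWord_cons (a : A) (w : List A) (c : Γ) :
    conjWord x (a :: w) c = conjWord x [a] (conjWord x w c) :=
  conjWord_append x [a] w c

lemma conjWord_cons_cons (a a' : A) (w : List A) (c : Γ) :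
    conjWord x (a :: a' :: w) c = MulAut.conj ⁅x a, x a'⁆ (conjWord x (a' :: a :: w) c) := by
  simp only [conjWord, List.map_cons, List.prod_cons, ← MulAut.mul_apply, ← map_mul,
    commutatorElement_def]
  group

lemma map_conjWord {Δ : Type*} [Group Δ] (π : Γ →* Δ) (w : List A) (c : Γ) :
    π (conjWord x w c) = conjWord (π ∘ x) w (π c) := by
  simp [conjWord_apply, map_list_prod]

end conjWord

/-- The set of base letters occurring in a word. -/
noncomputable def baseSupport [Fintype I] (b : I → A) (w : List A) : Finset I :=
  open Classical in {i | b i ∈ w}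

section baseSupport

variable [Fintype I] {b : I → A}

@[simp] lemma mem_baseSupport {w : List A} {i : I} : i ∈ baseSupport b w ↔ b i ∈ w := by
  simp [baseSupport]

lemma exists_perm_append_singleton {a : A} {v : List A} (ha : a ∈ v) :
    ∃ v', v.Perm (v' ++ [a]) := by
  classical
  exact ⟨v.erase a, (List.perm_cons_erase ha).trans (List.perm_append_singleton a _).symm⟩

lemma exists_perm_append_singleton_of_not_nodup {v : List A} (hv : ¬ v.Nodup) :
    ∃ v' a, v.Perm (v' ++ [a]) ∧ a ∈ v' := by
  classical
  obtain ⟨a, ha⟩ := List.exists_duplicate_iff_not_nodup.2 hv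
  obtain ⟨v', h⟩ := exists_perm_append_singleton ha.mem
  have hcount := List.duplicate_iff_two_le_count.1 ha
  rw [h.count_eq, List.count_append, List.count_singleton_self] at hcount
  exact ⟨v', a, h, List.count_pos_iff.1 (by lia)⟩

lemma wordWeight_le_card_baseSupport {deg : A → ℕ} (hdeg : ∀ i, deg (b i) = 1) {v : List A}
    (hv : v.Nodup) (hb : ∀ a ∈ v, a ∈ Set.range b) :
    wordWeight deg v ≤ (baseSupport b v).card := by
  classical
  obtain ⟨u, rfl⟩ : v ∈ Set.range (List.map b) := (Set.range_list_map b).ge hb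
  rw [wordWeight_map_eq_length deg hdeg, ← List.toFinset_card_of_nodup hv.of_map]
  refine Finset.card_le_card fun i hi ↦ mem_baseSupport.2 ?_
  exact List.mem_map_of_mem (List.mem_toFinset.1 hi)

lemma exists_perm_baseSupport_subset {deg : A → ℕ} (hdeg : ∀ i, deg (b i) = 1) {v : List A}
    (hv : (baseSupport b v).card < wordWeight deg v) :
    ∃ v' a, v.Perm (v' ++ [a]) ∧ baseSupport b v ⊆ baseSupport b v' := by
  by_cases hb : ∀ a ∈ v, a ∈ Set.range b
  · have hdup : ¬ v.Nodup := fun h ↦ (wordWeight_le_card_baseSupport hdeg h hb).not_gt hv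
    obtain ⟨v', a, h, ha⟩ := exists_perm_append_singleton_of_not_nodup hdup
    refine ⟨v', a, h, fun i hi ↦ ?_⟩
    rw [mem_baseSupport, h.mem_iff, List.mem_append, List.mem_singleton] at hi
    exact mem_baseSupport.2 (hi.elim id fun hia ↦ hia ▸ ha)
  · push Not at hb
    obtain ⟨a, ha, hab⟩ := hb
    obtain ⟨v', h⟩ := exists_perm_append_singleton ha
    refine ⟨v', a, h, fun i hi ↦ ?_⟩
    rw [mem_baseSupport, h.mem_iff, List.mem_append, List.mem_singleton] at hi
    exact mem_baseSupport.2 (hi.resolve_right fun hia ↦ hab ⟨i, hia⟩)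

end baseSupport

/-- A family `x` of elements of a group, a set `C` containing their commutators, and a finite
family `b` of base letters of weight one, such that the conjugate of an element of `C` by any letter
is a product of conjugates by base words of the same weight, whose letters may be chosen in any
prescribed set of `r` base letters. -/
structure ExchangeSystem [Fintype I] (r : ℕ) (deg : A → ℕ) (b : I → A) (x : A → Γ) (C : Set Γ) :
    Prop where
  two_mul_le_card : 2 * r ≤ Fintype.card I + 1
  deg_pos : ∀ a, 0 < deg a
  deg_base : ∀ i, deg (b i) = 1
  exists_base_eq_one : ∃ i, x (b i) = 1
  commutator_mem : ∀ a a', ⁅x a, x a'⁆ ∈ C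
  exchange : ∀ a, ∀ c ∈ C, ∀ S : Finset I, S.card = r → conjWord x [a] c ∈ closure
    ((fun u : List I ↦ conjWord x (u.map b) c) '' {u | u.length = deg a ∧ ∀ i ∈ u, i ∈ S})

/-- The conjugates of elements of `C` by words of weight at most `m` commute with those by words
of weight at most `n`. -/
def ConjugatesCommute (deg : A → ℕ) (x : A → Γ) (C : Set Γ) (m n : ℕ) : Prop :=
  ∀ v w, wordWeight deg v ≤ m → wordWeight deg w ≤ n → ∀ c ∈ C, ∀ c' ∈ C,
    Commute (conjWord x v c) (conjWord x w c')

namespace ExchangeSystem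

variable [Fintype I] {r : ℕ} {deg : A → ℕ} {b : I → A} {x : A → Γ} {C : Set Γ}

lemma conjWord_eq_of_perm (E : ExchangeSystem r deg b x C) {n : ℕ}
    (hn : ConjugatesCommute deg x C 0 n) {v w : List A} (h : v.Perm w)
    (hv : wordWeight deg v ≤ n) {c : Γ} (hc : c ∈ C) : conjWord x v c = conjWord x w c := by
  induction h with
  | nil => rfl
  | cons a _ ih =>
    rw [wordWeight_cons] at hv
    rw [conjWord_cons, ih (by lia), ← conjWord_cons]
  | swap a a' l =>
    have hcomm : Commute ⁅x a', x a⁆ (conjWord x (a :: a' :: l) c) := by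
      have hw : wordWeight deg (a :: a' :: l) ≤ n := by
        simp only [wordWeight_cons] at hv ⊢
        lia
      simpa using hn [] _ le_rfl hw _ (E.commutator_mem a' a) c hc
    rw [conjWord_cons_cons, MulAut.conj_apply, hcomm.eq, mul_inv_cancel_right]
  | trans h₁ _ ih₁ ih₂ => rw [ih₁ hv, ih₂ (by rwa [← wordWeight_eq_of_perm h₁])]

lemma exists_wordWeight_eq (E : ExchangeSystem r deg b x C) {v : List A} {n : ℕ}
    (hv : wordWeight deg v ≤ n) (c : Γ) :
    ∃ v', wordWeight deg v' = n ∧ conjWord x v' c = conjWord x v c := by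
  obtain ⟨i, hi⟩ := E.exists_base_eq_one
  refine ⟨List.replicate (n - wordWeight deg v) (b i) ++ v, ?_, ?_⟩
  · simp only [wordWeight, List.map_append, List.map_replicate, E.deg_base, List.sum_append,
      List.sum_replicate, smul_eq_mul, mul_one] at hv ⊢
    lia
  · simp [conjWord, hi]

lemma commute_of_exchange (E : ExchangeSystem r deg b x C) {S : Finset I} (hS : S.card = r)
    (v : List A) (a : A) {c : Γ} (hc : c ∈ C) {z : Γ}
    (h : ∀ u : List I, u.length = deg a → (∀ i ∈ u, i ∈ S) →
      Commute (conjWord x (v ++ u.map b) c) z) :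
    Commute (conjWord x (v ++ [a]) c) z := by
  rw [conjWord_append]
  refine commute_map_of_mem_closure _ (E.exchange a c hc S hS) ?_
  rintro _ ⟨u, ⟨hu, huS⟩, rfl⟩
  simpa only [conjWord_append] using h u hu huS

lemma wordWeight_exchange (E : ExchangeSystem r deg b x C) (v : List A) {a : A} {u : List I}
    (hu : u.length = deg a) : wordWeight deg (v ++ u.map b) = wordWeight deg (v ++ [a]) := by
  simp [wordWeight_map_eq_length deg E.deg_base, hu]

lemma exists_mem_of_length_eq_deg (E : ExchangeSystem r deg b x C) {a : A} {u : List I}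
    (hu : u.length = deg a) : ∃ i, i ∈ u :=
  List.exists_mem_of_length_pos (hu ▸ E.deg_pos a)

lemma commute_of_le_card_baseSupport (E : ExchangeSystem r deg b x C) {v w : List A} {n : ℕ}
    (hv : r ≤ (baseSupport b v).card) (hw : wordWeight deg w = n) (hn : 0 < n) {c c' : Γ}
    (hc' : c' ∈ C) (hshare : ∀ w, wordWeight deg w ≤ n → ∀ a ∈ v, a ∈ w →
      Commute (conjWord x v c) (conjWord x w c')) :
    Commute (conjWord x v c) (conjWord x w c') := by
  obtain ⟨S, hSv, hS⟩ := Finset.exists_subset_card_eq hv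
  obtain rfl | ⟨w, a, rfl⟩ := List.eq_nil_or_concat' w
  · simp_all
  refine (E.commute_of_exchange hS w a hc' fun u hu huS ↦ ?_).symm
  obtain ⟨i, hi⟩ := E.exists_mem_of_length_eq_deg hu
  refine (hshare _ (E.wordWeight_exchange w hu ▸ hw.le) (b i) ?_ ?_).symm
  · exact mem_baseSupport.1 (hSv (huS i hi))
  · exact List.mem_append_right _ (List.mem_map_of_mem hi)

lemma card_compl_baseSupport_lt {v v' : List A} (hv : baseSupport b v ⊆ baseSupport b v')
    {i : I} {u : List I} (hi : i ∈ u) (hiv : i ∉ baseSupport b v) :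
    Fintype.card I - (baseSupport b (v' ++ u.map b)).card <
      Fintype.card I - (baseSupport b v).card := by
  have hss : baseSupport b v ⊂ baseSupport b (v' ++ u.map b) := by
    refine (Finset.ssubset_iff_of_subset fun j hj ↦ ?_).2 ⟨i, ?_, hiv⟩
    · exact mem_baseSupport.2 (List.mem_append_left _ (mem_baseSupport.1 (hv hj)))
    · exact mem_baseSupport.2 (List.mem_append_right _ (List.mem_map_of_mem hi))
  have := Finset.card_lt_card hss
  have := (baseSupport b (v' ++ u.map b)).card_le_univ
  lia

-- While the base support of `v` has fewer than `r` letters, `v` has a redundant letter, which can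
-- be exchanged for base letters outside the support.
lemma conjugatesCommute_of_shared_letter (E : ExchangeSystem r deg b x C) {m n : ℕ} (hm : r ≤ m)
    (hn : 0 < n) (h₀ : ConjugatesCommute deg x C 0 m)
    (hshare : ∀ v w, wordWeight deg v ≤ m → wordWeight deg w ≤ n → ∀ a ∈ v, a ∈ w →
      ∀ c ∈ C, ∀ c' ∈ C, Commute (conjWord x v c) (conjWord x w c')) :
    ConjugatesCommute deg x C m n := by
  classical
  intro v w hv hw c hc c' hc'
  obtain ⟨v, hv, hvc⟩ := E.exists_wordWeight_eq hv c
  obtain ⟨w, hw, hwc⟩ := E.exists_wordWeight_eq hw c'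
  rw [← hvc, ← hwc]
  clear hvc hwc
  induction hk : Fintype.card I - (baseSupport b v).card using Nat.strong_induction_on
    generalizing v with
  | h k ih =>
  subst hk
  by_cases hcard : r ≤ (baseSupport b v).card
  · exact E.commute_of_le_card_baseSupport hcard hw hn hc' fun w hw a hav haw ↦
      hshare v w hv.le hw a hav haw c hc c' hc'
  have hcompl : r ≤ (baseSupport b v)ᶜ.card := by
    have := E.two_mul_le_card
    rw [Finset.card_compl]
    lia
  obtain ⟨S, hSv, hS⟩ := Finset.exists_subset_card_eq hcompl
  obtain ⟨v', a, hperm, hsupp⟩ :=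
    exists_perm_baseSupport_subset (v := v) E.deg_base (by lia)
  rw [E.conjWord_eq_of_perm h₀ hperm hv.le hc]
  refine E.commute_of_exchange hS v' a hc fun u hu huS ↦ ?_
  obtain ⟨i, hi⟩ := E.exists_mem_of_length_eq_deg hu
  refine ih _ (card_compl_baseSupport_lt hsupp hi ?_) _ ?_ rfl
  · exact Finset.mem_compl.1 (hSv (huS i hi))
  · rw [E.wordWeight_exchange v' hu, ← wordWeight_eq_of_perm hperm, hv]

lemma commute_conjWord_cons (E : ExchangeSystem r deg b x C) {n : ℕ}
    (h : ConjugatesCommute deg x C n n) {a : A} {v w : List A}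
    (hv : wordWeight deg (a :: v) ≤ n + 1) (hw : wordWeight deg (a :: w) ≤ n + 1)
    {c c' : Γ} (hc : c ∈ C) (hc' : c' ∈ C) :
    Commute (conjWord x (a :: v) c) (conjWord x (a :: w) c') := by
  have := E.deg_pos a
  rw [wordWeight_cons] at hv hw
  rw [conjWord_cons, conjWord_cons x a w]
  exact (h v w (by lia) (by lia) c hc c' hc').map (conjWord x [a])

lemma exists_conjWord_eq_cons (E : ExchangeSystem r deg b x C) {n : ℕ}
    (h : ConjugatesCommute deg x C 0 n) {a : A} {v : List A} (ha : a ∈ v)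
    (hv : wordWeight deg v ≤ n) {c : Γ} (hc : c ∈ C) :
    ∃ v', wordWeight deg (a :: v') = wordWeight deg v ∧
      conjWord x v c = conjWord x (a :: v') c := by
  classical
  have hperm := List.perm_cons_erase ha
  exact ⟨v.erase a, (wordWeight_eq_of_perm hperm).symm, E.conjWord_eq_of_perm h hperm hv hc⟩

lemma commute_of_shared_letter (E : ExchangeSystem r deg b x C) {n : ℕ}
    (h : ConjugatesCommute deg x C n n) {v w : List A} (hv : wordWeight deg v ≤ n)
    (hw : wordWeight deg w ≤ n + 1) {a : A} (hav : a ∈ v) (haw : a ∈ w) {c c' : Γ} (hc : c ∈ C)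
    (hc' : c' ∈ C) : Commute (conjWord x v c) (conjWord x w c') := by
  have h₀ : ConjugatesCommute deg x C 0 n := fun v w hv ↦ h v w (hv.trans n.zero_le)
  obtain ⟨v', hv', hvv'⟩ := E.exists_conjWord_eq_cons h₀ hav hv hc
  rw [hvv']
  obtain _ | ⟨g, w⟩ := w
  · simp at haw
  obtain rfl | hag := eq_or_ne a g
  · exact E.commute_conjWord_cons h (by lia) hw hc hc'
  have hg := E.deg_pos g
  rw [wordWeight_cons] at hw
  obtain ⟨w', hw', hww'⟩ :=
    E.exists_conjWord_eq_cons h₀ (List.mem_of_ne_of_mem hag haw) (by lia) hc'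
  rw [conjWord_cons x g w, hww', ← conjWord_cons, conjWord_cons_cons]
  have hcomm : Commute (conjWord x (a :: v') c) ⁅x g, x a⁆ := by
    simpa using h _ [] (hv'.trans_le hv) n.zero_le c hc _ (E.commutator_mem g a)
  have hswap : Commute (conjWord x (a :: v') c) (conjWord x (a :: g :: w') c') := by
    refine E.commute_conjWord_cons h (by lia) ?_ hc hc'
    rw [wordWeight_cons] at hw'
    simp only [wordWeight_cons]
    lia
  exact (hcomm.mul_right hswap).mul_right hcomm.inv_right

lemma conjugatesCommute_succ (E : ExchangeSystem r deg b x C) {n : ℕ} (hn : r ≤ n)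
    (h : ConjugatesCommute deg x C n n) : ConjugatesCommute deg x C (n + 1) (n + 1) := by
  have h₁ : ConjugatesCommute deg x C n (n + 1) :=
    E.conjugatesCommute_of_shared_letter hn n.succ_pos
      (fun v w hv ↦ h v w (hv.trans n.zero_le)) fun v w hv hw a hav haw c hc c' hc' ↦
        E.commute_of_shared_letter h hv hw hav haw hc hc'
  have h₀ : ConjugatesCommute deg x C 0 (n + 1) := fun v w hv ↦ h₁ v w (hv.trans n.zero_le)
  refine E.conjugatesCommute_of_shared_letter (hn.trans n.le_succ) n.succ_pos h₀
    fun v w hv hw a hav haw c hc c' hc' ↦ ?_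
  obtain ⟨v', hv', hvv'⟩ := E.exists_conjWord_eq_cons h₀ hav hv hc
  obtain ⟨w', hw', hww'⟩ := E.exists_conjWord_eq_cons h₀ haw hw hc'
  rw [hvv', hww']
  exact E.commute_conjWord_cons h (by lia) (by lia) hc hc'

theorem commute_conjWord (E : ExchangeSystem r deg b x C) (h : ConjugatesCommute deg x C r r)
    (v w : List A) {c c' : Γ} (hc : c ∈ C) (hc' : c' ∈ C) :
    Commute (conjWord x v c) (conjWord x w c') := by
  have hall : ∀ n ≥ r, ConjugatesCommute deg x C n n := fun n hn ↦
    Nat.le_induction h (fun n hn ↦ E.conjugatesCommute_succ hn) n hn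
  exact hall (r + wordWeight deg v + wordWeight deg w) (by lia) v w (by lia) (by lia) c hc c' hc'

end ExchangeSystem

end CommutingConjugates

section CommutatorSubgroup

open Subgroup
open scoped commutatorElement

variable {Γ A I : Type*} [Group Γ]

/-- The subgroup generated by the conjugates of the elements of `C` by positive words in `x`. -/
def positiveConjugates (x : A → Γ) (C : Set Γ) : Subgroup Γ :=
  closure {y | ∃ w, ∃ c ∈ C, y = conjWord x w c}

lemma conjWord_mem_positiveConjugates {x : A → Γ} {C : Set Γ} (w : List A) {n : Γ}
    (hn : n ∈ positiveConjugates x C) : conjWord x w n ∈ positiveConjugates x C := by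
  have hle : positiveConjugates x C ≤
      (positiveConjugates x C).comap (conjWord x w).toMonoidHom := by
    refine (closure_le _).2 ?_
    rintro _ ⟨v, c, hc, rfl⟩
    exact subset_closure ⟨w ++ v, c, hc, (conjWord_append x w v c).symm⟩
  exact hle hn

lemma mem_positiveConjugates {x : A → Γ} {C : Set Γ} {c : Γ} (hc : c ∈ C) :
    c ∈ positiveConjugates x C :=
  subset_closure ⟨[], c, hc, (conjWord_nil x c).symm⟩

lemma commutator_prod_mem_positiveConjugates {x : A → Γ} {C : Set Γ}
    (hC : ∀ a a', ⁅x a, x a'⁆ ∈ C) (p : List A) (a : A) :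
    ⁅(p.map x).prod, x a⁆ ∈ positiveConjugates x C := by
  induction p with
  | nil => simp
  | cons a' p ih =>
    have hmul : ⁅((a' :: p).map x).prod, x a⁆ =
        conjWord x [a'] ⁅(p.map x).prod, x a⁆ * ⁅x a', x a⁆ := by
      simp only [conjWord_apply, commutatorElement_def, List.map_cons, List.map_nil,
        List.prod_cons, List.prod_nil]
      group
    rw [hmul]
    exact mul_mem (conjWord_mem_positiveConjugates _ ih) (mem_positiveConjugates (hC a' a))

-- Negative powers of letters are collected on the left and positive powers on the right.
lemma exists_prod_mul_eq_mul_prod {x : A → Γ} {C : Set Γ} (hC : ∀ a a', ⁅x a, x a'⁆ ∈ C)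
    (htop : closure (Set.range x ∪ C) = ⊤) (g : Γ) :
    ∃ p p' : List A, ∃ n ∈ positiveConjugates x C,
      g = (p.map x).prod⁻¹ * (n * (p'.map x).prod) := by
  induction htop.ge (mem_top g) using closure_induction_left with
  | one => exact ⟨[], [], 1, one_mem _, by simp⟩
  | mul_left s hs g _ ih =>
    obtain ⟨p, p', n, hn, rfl⟩ := ih
    obtain ⟨a, rfl⟩ | hc := hs
    · refine ⟨p, a :: p', ⁅(p.map x).prod, x a⁆ * conjWord x [a] n,
        mul_mem (commutator_prod_mem_positiveConjugates hC p a)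
          (conjWord_mem_positiveConjugates _ hn), ?_⟩
      simp [conjWord_apply, commutatorElement_def, mul_assoc]
    · refine ⟨p, p', conjWord x p s * n,
        mul_mem (conjWord_mem_positiveConjugates p (mem_positiveConjugates hc)) hn, ?_⟩
      simp [conjWord_apply, mul_assoc]
  | inv_mul_cancel s hs g _ ih =>
    obtain ⟨p, p', n, hn, rfl⟩ := ih
    obtain ⟨a, rfl⟩ | hc := hs
    · exact ⟨p ++ [a], p', n, hn, by simp [mul_assoc]⟩
    · refine ⟨p, p', conjWord x p s⁻¹ * n, mul_mem (conjWord_mem_positiveConjugates p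
        (inv_mem (mem_positiveConjugates hc))) hn, ?_⟩
      simp [conjWord_apply, mul_assoc]

lemma commutator_le_of_closure_eq_top {N : Subgroup Γ} [N.Normal] {S : Set Γ}
    (hS : closure S = ⊤) (h : ∀ s ∈ S, ∀ t ∈ S, ⁅s, t⁆ ∈ N) : commutator Γ ≤ N := by
  have hmem : ∀ g : Γ, (g : Γ ⧸ N) ∈ closure (QuotientGroup.mk' N '' S) := fun g ↦ by
    rw [← MonoidHom.map_closure, hS]
    exact mem_map_of_mem (QuotientGroup.mk' N) (mem_top g)
  have hiff : ∀ s t : Γ, ⁅s, t⁆ ∈ N ↔ Commute (s : Γ ⧸ N) t := fun s t ↦ by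
    rw [← QuotientGroup.eq_one_iff, ← commutatorElement_eq_one_iff_commute]
    rfl
  rw [commutator_def, commutator_le]
  refine fun s _ t _ ↦ (hiff s t).2 (commute_of_mem_closure_of_mem_closure (hmem s) (hmem t) ?_)
  rintro _ ⟨s, hs, rfl⟩ _ ⟨t, ht, rfl⟩
  exact (hiff s t).1 (h s hs t ht)

lemma commutator_le_normalClosure {x : A → Γ} {C : Set Γ} (hC : ∀ a a', ⁅x a, x a'⁆ ∈ C)
    (htop : closure (Set.range x ∪ C) = ⊤) : commutator Γ ≤ normalClosure C := by
  refine commutator_le_of_closure_eq_top htop ?_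
  rintro s (⟨a, rfl⟩ | hs) t (⟨a', rfl⟩ | ht)
  · exact subset_normalClosure (hC a a')
  · exact commutator_le_right ⊤ _ (commutator_mem_commutator (mem_top _) (subset_normalClosure ht))
  all_goals
    exact commutator_le_left _ ⊤ (commutator_mem_commutator (subset_normalClosure hs) (mem_top _))

namespace ExchangeSystem

variable [Fintype I] {r : ℕ} {deg : A → ℕ} {b : I → A} {x : A → Γ} {C : Set Γ}

lemma commute_of_mem_positiveConjugates (E : ExchangeSystem r deg b x C)
    (h : ConjugatesCommute deg x C r r) {y z : Γ} (hy : y ∈ positiveConjugates x C)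
    (hz : z ∈ positiveConjugates x C) : Commute y z := by
  refine commute_of_mem_closure_of_mem_closure hy hz ?_
  rintro _ ⟨v, c, hc, rfl⟩ _ ⟨w, c', hc', rfl⟩
  exact E.commute_conjWord h v w hc hc'

lemma commute_conj (E : ExchangeSystem r deg b x C) (h : ConjugatesCommute deg x C r r)
    (htop : closure (Set.range x ∪ C) = ⊤) {c c' : Γ} (hc : c ∈ C) (hc' : c' ∈ C) (g : Γ) :
    Commute c (MulAut.conj g c') := by
  obtain ⟨p, p', n, hn, rfl⟩ := exists_prod_mul_eq_mul_prod E.commutator_mem htop g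
  have hleft : conjWord x p c ∈ positiveConjugates x C :=
    conjWord_mem_positiveConjugates p (mem_positiveConjugates hc)
  have hright : n * conjWord x p' c' * n⁻¹ ∈ positiveConjugates x C :=
    mul_mem (mul_mem hn (conjWord_mem_positiveConjugates p' (mem_positiveConjugates hc')))
      (inv_mem hn)
  have := (E.commute_of_mem_positiveConjugates h hleft hright).map (MulAut.conj (p.map x).prod⁻¹)
  convert this using 1 <;> simp [conjWord_apply, mul_assoc]

lemma isMulCommutative_normalClosure (E : ExchangeSystem r deg b x C)
    (h : ConjugatesCommute deg x C r r) (htop : closure (Set.range x ∪ C) = ⊤) :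
    IsMulCommutative (normalClosure C) := by
  refine isMulCommutative_closure fun s hs t ht ↦ ?_
  obtain ⟨c, hc, hs⟩ := Group.mem_conjugatesOfSet_iff.1 hs
  obtain ⟨c', hc', ht⟩ := Group.mem_conjugatesOfSet_iff.1 ht
  obtain ⟨g, rfl⟩ := isConj_iff.1 hs
  obtain ⟨g', rfl⟩ := isConj_iff.1 ht
  have := (E.commute_conj h htop hc hc' (g⁻¹ * g')).map (MulAut.conj g)
  simp only [MulAut.conj_apply] at this
  convert this.eq using 2 <;> group

theorem isMulCommutative_commutator (E : ExchangeSystem r deg b x C)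
    (h : ConjugatesCommute deg x C r r) (htop : closure (Set.range x ∪ C) = ⊤) :
    IsMulCommutative (commutator Γ) := by
  have := E.isMulCommutative_normalClosure h htop
  have hle := commutator_le_normalClosure E.commutator_mem htop
  exact .of_setLike_mul_comm fun y hy z hz ↦ setLike_mul_comm (hle hy) (hle hz)

end ExchangeSystem

end CommutatorSubgroup

/-! ### Normal subgroups of finitely generated metabelian groups -/

section Metabelian

open Subgroup
open scoped commutatorElement IsMulCommutative

variable (Γ : Type*) [Group Γ] [IsMulCommutative (commutator Γ)]

/-- The conjugation action of the abelianization of a metabelian group on its commutator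
subgroup. -/
noncomputable def conjRepresentation :
    Representation ℤ (Abelianization Γ) (Additive (commutator Γ)) :=
  QuotientGroup.lift (commutator Γ)
    { toFun := fun g ↦ (MonoidHom.toAdditive
        (MulAut.conjNormal (H := commutator Γ) g).toMonoidHom).toIntLinearMap
      map_one' := by ext; simp
      map_mul' := fun g h ↦ by ext; simp } fun g hg ↦ by
    refine LinearMap.ext fun n ↦ Additive.toMul.injective (Subtype.ext ?_)
    exact mul_inv_eq_of_eq_mul (setLike_mul_comm hg (Additive.toMul n).2)

variable {Γ}

/-- The part of a normal subgroup that lies in the commutator subgroup, as a subrepresentation. -/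
noncomputable def commutatorPart (L : Subgroup Γ) [hL : L.Normal] :
    Subrepresentation (conjRepresentation Γ) where
  toSubmodule := AddSubgroup.toIntSubmodule (L.subgroupOf (commutator Γ)).toAddSubgroup
  apply_mem_toSubmodule q n hn := by
    obtain ⟨g, rfl⟩ := QuotientGroup.mk_surjective q
    exact hL.conj_mem _ hn g

lemma mem_commutatorPart {L : Subgroup Γ} [L.Normal] {n : Additive (commutator Γ)} :
    n ∈ commutatorPart L ↔ (n.toMul : Γ) ∈ L := Iff.rfl

/-- The normal subgroup of the ambient group carried by a subrepresentation. -/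
def subgroupOfSubrepresentation (σ : Subrepresentation (conjRepresentation Γ)) : Subgroup Γ :=
  (AddSubgroup.toSubgroup' σ.toSubmodule.toAddSubgroup).map (commutator Γ).subtype

lemma coe_mem_subgroupOfSubrepresentation {σ : Subrepresentation (conjRepresentation Γ)}
    {n : commutator Γ} : (n : Γ) ∈ subgroupOfSubrepresentation σ ↔ Additive.ofMul n ∈ σ :=
  mem_map_iff_mem (commutator Γ).subtype_injective

instance subgroupOfSubrepresentation_normal (σ : Subrepresentation (conjRepresentation Γ)) :
    (subgroupOfSubrepresentation σ).Normal where
  conj_mem := by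
    rintro _ ⟨n, hn, rfl⟩ g
    exact ⟨MulAut.conjNormal g n, σ.apply_mem_toSubmodule (Abelianization.of g) hn, rfl⟩

lemma eq_of_commutatorPart_eq_of_map_eq {N L : Subgroup Γ} [N.Normal] [L.Normal] (hle : N ≤ L)
    (hpart : commutatorPart L ≤ commutatorPart N)
    (hmap : L.map Abelianization.of ≤ N.map Abelianization.of) : N = L := by
  refine le_antisymm hle fun l hl ↦ ?_
  obtain ⟨n, hn, hnl⟩ := hmap ⟨l, hl, rfl⟩
  have hcomm : n⁻¹ * l ∈ commutator Γ := QuotientGroup.eq.1 hnl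
  have hmem : n⁻¹ * l ∈ N := mem_commutatorPart.1 <|
    @hpart (Additive.ofMul ⟨_, hcomm⟩) (mul_mem (inv_mem (hle hn)) hl)
  simpa using mul_mem hn hmem

variable [Group.FG Γ]

instance abelianization_fg : Group.FG (Abelianization Γ) := QuotientGroup.fg (commutator Γ)

lemma finite_conjRepresentation_asModule :
    Module.Finite (MonoidAlgebra ℤ (Abelianization Γ)) (conjRepresentation Γ).asModule := by
  obtain ⟨S, hS⟩ := Group.FG.out (G := Γ)
  let comm (p : S × S) : Additive (commutator Γ) := Additive.ofMul
    ⟨⁅(p.1 : Γ), p.2⁆, commutator_mem_commutator (mem_top _) (mem_top _)⟩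
  let P := Submodule.span (MonoidAlgebra ℤ (Abelianization Γ))
    (Set.range ((conjRepresentation Γ).asModuleEquiv.symm ∘ comm))
  have hcomm (p : S × S) : comm p ∈ Subrepresentation.ofSubmodule' P :=
    Submodule.subset_span (M := (conjRepresentation Γ).asModule) ⟨p, rfl⟩
  have hle : commutator Γ ≤ subgroupOfSubrepresentation (Subrepresentation.ofSubmodule' P) :=
    commutator_le_of_closure_eq_top hS fun s hs t ht ↦
      coe_mem_subgroupOfSubrepresentation.2 (hcomm (⟨s, hs⟩, ⟨t, ht⟩))
  have htop : P = ⊤ := eq_top_iff.2 fun n _ ↦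
    coe_mem_subgroupOfSubrepresentation.1 <|
      hle (Additive.toMul ((conjRepresentation Γ).asModuleEquiv n)).2
  exact Module.finite_def.2 (htop ▸ Submodule.fg_span (Set.finite_range _))

lemma wellFoundedGT_subrepresentation_conjRepresentation :
    WellFoundedGT (Subrepresentation (conjRepresentation Γ)) := by
  have := finite_conjRepresentation_asModule (Γ := Γ)
  have : IsNoetherianRing (MonoidAlgebra ℤ (Abelianization Γ)) :=
    Algebra.FiniteType.isNoetherianRing ℤ _
  have : IsNoetherian (MonoidAlgebra ℤ (Abelianization Γ)) (conjRepresentation Γ).asModule :=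
    isNoetherian_of_isNoetherianRing_of_finite _ _
  exact Subrepresentation.subrepresentationSubmoduleOrderIso.strictMono.wellFoundedGT

lemma wellFoundedGT_subgroup_of_commGroup (Q : Type*) [CommGroup Q] [Group.FG Q] :
    WellFoundedGT (Subgroup Q) := by
  have : Module.Finite ℤ (Additive Q) := Module.Finite.iff_addGroup_fg.2 inferInstance
  exact (Subgroup.toAddSubgroup.trans AddSubgroup.toIntSubmodule).strictMono.wellFoundedGT

-- A normal subgroup is determined by its intersection with the commutator subgroup and its image in
-- the abelianization, and both are chosen from lattices with the ascending chain condition.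
theorem isFinitelyNormallyGenerated_of_normal (L : Subgroup Γ) [L.Normal] :
    L.IsFinitelyNormallyGenerated := by
  have := wellFoundedGT_subrepresentation_conjRepresentation (Γ := Γ)
  have := wellFoundedGT_subgroup_of_commGroup (Abelianization Γ)
  let invariants (T : Finset Γ) : Subrepresentation (conjRepresentation Γ) ×
      Subgroup (Abelianization Γ) :=
    (commutatorPart (normalClosure (T : Set Γ)), (normalClosure (T : Set Γ)).map Abelianization.of)
  obtain ⟨_, ⟨T, hT, rfl⟩, hmax⟩ := WellFounded.has_min (wellFounded_gt (α := _ × _))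
    (invariants '' {T : Finset Γ | (T : Set Γ) ⊆ L}) ⟨_, ∅, by simp, rfl⟩
  refine ⟨T, T.finite_toSet, le_antisymm (normalClosure_le_normal hT) fun l hl ↦ ?_⟩
  classical
  have hle : normalClosure (T : Set Γ) ≤ normalClosure (insert l T : Finset Γ) :=
    normalClosure_mono (by simp)
  have hinv : ¬ invariants T < invariants (insert l T) :=
    hmax _ ⟨_, by simpa [Set.insert_subset_iff] using ⟨hl, hT⟩, rfl⟩
  have hge : invariants (insert l T) ≤ invariants T :=
    not_not.1 fun h ↦ hinv (lt_of_le_not_ge ⟨fun n hn ↦ hle hn, map_mono hle⟩ h)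
  rw [eq_of_commutatorPart_eq_of_map_eq hle hge.1 hge.2]
  exact subset_normalClosure (by simp)

end Metabelian

/-! ### A criterion for finite presentability -/

section FinitePresentability

open Subgroup
open scoped commutatorElement

variable {K F A I : Type*} [Group K] [Group F]

lemma exists_mem_ker_forall_mk_mem_closure (f : F →* K) {y : F} {T : Set F}
    (h : f y ∈ closure (f '' T)) :
    ∃ ρ ∈ f.ker, ∀ (N : Subgroup F) [N.Normal], ρ ∈ N →
      QuotientGroup.mk' N y ∈ closure (QuotientGroup.mk' N '' T) := by
  rw [← MonoidHom.map_closure] at h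
  obtain ⟨z, hz, hzy⟩ := h
  refine ⟨z⁻¹ * y, by simp [MonoidHom.mem_ker, hzy], fun N _ hN ↦ ?_⟩
  rw [← MonoidHom.map_closure]
  exact ⟨z, hz, QuotientGroup.eq.2 hN⟩

lemma exists_finite_relators_conjugatesCommute [Finite A] (f : F →* K) {r : ℕ} {deg : A → ℕ}
    (hdeg : ∀ a, 0 < deg a) {X : A → F} {C : Set F} (hC : C.Finite)
    (h : ConjugatesCommute deg (f ∘ X) (f '' C) r r) :
    ∃ R : Set F, R.Finite ∧ R ⊆ f.ker ∧ ∀ (N : Subgroup F) [N.Normal], R ⊆ N →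
      ConjugatesCommute deg (QuotientGroup.mk' N ∘ X) (QuotientGroup.mk' N '' C) r r := by
  let W : Set (List A) := {v | wordWeight deg v ≤ r}
  have hW : W.Finite := (List.finite_length_le A r).subset fun v hv ↦
    (length_le_wordWeight hdeg v).trans hv
  refine ⟨Set.image2 (fun y z ↦ ⁅y, z⁆) (Set.image2 (fun v c ↦ conjWord X v c) W C)
    (Set.image2 (fun v c ↦ conjWord X v c) W C), ?_, ?_, ?_⟩
  · exact (hW.image2 _ hC).image2 _ (hW.image2 _ hC)
  · rintro _ ⟨_, ⟨v, hv, c, hc, rfl⟩, _, ⟨w, hw, c', hc', rfl⟩, rfl⟩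
    rw [SetLike.mem_coe, MonoidHom.mem_ker, map_commutatorElement, map_conjWord, map_conjWord,
      commutatorElement_eq_one_iff_commute]
    exact h v w hv hw _ ⟨c, hc, rfl⟩ _ ⟨c', hc', rfl⟩
  · rintro N _ hN v w hv hw _ ⟨c, hc, rfl⟩ _ ⟨c', hc', rfl⟩
    rw [← map_conjWord, ← map_conjWord, ← commutatorElement_eq_one_iff_commute,
      ← map_commutatorElement]
    exact (QuotientGroup.eq_one_iff _).2
      (hN ⟨_, ⟨v, hv, c, hc, rfl⟩, _, ⟨w, hw, c', hc', rfl⟩, rfl⟩)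

namespace ExchangeSystem

variable [Fintype I] {r : ℕ} {deg : A → ℕ} {b : I → A} {x : A → K} {C D : Set K}

lemma anti (E : ExchangeSystem r deg b x D) (h : C ⊆ D) (hC : ∀ a a', ⁅x a, x a'⁆ ∈ C) :
    ExchangeSystem r deg b x C where
  __ := E
  commutator_mem := hC
  exchange a c hc := E.exchange a c (h hc)

lemma exists_finite_relators [Finite A] {f : F →* K} {X : A → F} {C : Set F} (hC : C.Finite)
    (hX : ∀ a a', ⁅X a, X a'⁆ ∈ C) (E : ExchangeSystem r deg b (f ∘ X) (f '' C)) :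
    ∃ R : Set F, R.Finite ∧ R ⊆ f.ker ∧ ∀ (N : Subgroup F) [N.Normal], R ⊆ N →
      ExchangeSystem r deg b (QuotientGroup.mk' N ∘ X) (QuotientGroup.mk' N '' C) := by
  obtain ⟨i, hi⟩ := E.exists_base_eq_one
  have hrel (p : A × C × {S : Finset I // S.card = r}) :=
    exists_mem_ker_forall_mk_mem_closure f (y := conjWord X [p.1] p.2.1)
      (T := (fun u : List I ↦ conjWord X (u.map b) p.2.1) ''
        {u | u.length = deg p.1 ∧ ∀ i ∈ u, i ∈ p.2.2.1}) <| by
      simpa only [map_conjWord, Set.image_image] using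
        E.exchange p.1 _ (Set.mem_image_of_mem f p.2.1.2) p.2.2 p.2.2.2
  choose ρ hρ hρN using hrel
  have := hC.to_subtype
  refine ⟨insert (X (b i)) (Set.range ρ), (Set.finite_range ρ).insert _, ?_, fun N _ hN ↦ ?_⟩
  · exact Set.insert_subset hi (Set.range_subset_iff.2 hρ)
  · rw [Set.insert_subset_iff, Set.range_subset_iff] at hN
    refine { E with
      exists_base_eq_one := ⟨i, (QuotientGroup.eq_one_iff _).2 hN.1⟩
      commutator_mem := fun a a' ↦ ⟨_, hX a a', map_commutatorElement _ _ _⟩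
      exchange := ?_ }
    rintro a _ ⟨c, hc, rfl⟩ S hS
    simpa only [map_conjWord, Set.image_image] using
      hρN (a, ⟨c, hc⟩, ⟨S, hS⟩) N (hN.2 _)

lemma conjugatesCommute_of_normal {M : Subgroup K} [hM : M.Normal] [IsMulCommutative M]
    (hC : C ⊆ M) (m n : ℕ) : ConjugatesCommute deg x C m n := fun _ _ _ _ _ hc _ hc' ↦
  setLike_mul_comm (hM.conj_mem _ (hC hc) _) (hM.conj_mem _ (hC hc') _)

-- Finitely many relators already force the conclusion of `commute_conjWord`, hence present a
-- metabelian group; the remaining relators are then finitely normally generated.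
theorem isFinitelyPresented_of_surjective [Finite A] [Group.IsFinitelyPresented F] {f : F →* K}
    (hf : Function.Surjective f) {X : A → F} {C : Set F} (hC : C.Finite)
    (hX : ∀ a a', ⁅X a, X a'⁆ ∈ C) (htop : closure (Set.range X ∪ C) = ⊤)
    (E : ExchangeSystem r deg b (f ∘ X) (f '' C))
    (h : ConjugatesCommute deg (f ∘ X) (f '' C) r r) : Group.IsFinitelyPresented K := by
  obtain ⟨R₁, hR₁, hf₁, hN₁⟩ := E.exists_finite_relators hC hX
  obtain ⟨R₂, hR₂, hf₂, hN₂⟩ := exists_finite_relators_conjugatesCommute f E.deg_pos hC h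
  let N := normalClosure (R₁ ∪ R₂)
  have hR : R₁ ∪ R₂ ⊆ N := subset_normalClosure
  have htopN : closure (Set.range (QuotientGroup.mk' N ∘ X) ∪ QuotientGroup.mk' N '' C) = ⊤ := by
    rw [Set.range_comp, ← Set.image_union, ← MonoidHom.map_closure, htop,
      map_top_of_surjective _ (QuotientGroup.mk'_surjective N)]
  have : IsMulCommutative (commutator (F ⧸ N)) :=
    (hN₁ N (Set.subset_union_left.trans hR)).isMulCommutative_commutator
      (hN₂ N (Set.subset_union_right.trans hR)) htopN
  have : Group.FG (F ⧸ N) :=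
    Group.fg_iff.2 ⟨_, htopN, (Set.finite_range _).union (hC.image _)⟩
  have : Group.IsFinitelyPresented (F ⧸ N) :=
    .of_surjective (QuotientGroup.mk' N) (QuotientGroup.mk'_surjective N)
      ⟨_, hR₁.union hR₂, (QuotientGroup.ker_mk' N).symm⟩
  have hNf : N ≤ f.ker := normalClosure_le_normal (Set.union_subset hf₁ hf₂)
  exact .of_surjective (QuotientGroup.lift N f hNf)
    (QuotientGroup.lift_surjective_of_surjective _ _ hf _) (isFinitelyNormallyGenerated_of_normal _)

theorem isFinitelyPresented [Finite A] {M : Subgroup K} [M.Normal] [IsMulCommutative M]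
    (E : ExchangeSystem r deg b x M) {T : Set K} (hT : T.Finite) (hTM : T ⊆ M)
    (htop : closure (Set.range x ∪ T) = ⊤) : Group.IsFinitelyPresented K := by
  have := hT.to_subtype
  let f : FreeGroup (A ⊕ T) →* K := FreeGroup.lift (Sum.elim x (↑))
  let X (a : A) : FreeGroup (A ⊕ T) := .of (.inl a)
  let C : Set (FreeGroup (A ⊕ T)) :=
    (Set.range fun p : A × A ↦ ⁅X p.1, X p.2⁆) ∪ Set.range fun t ↦ .of (.inr t)
  have hfX : f ∘ X = x := by ext; simp [f, X]
  have hXC (a a') : ⁅X a, X a'⁆ ∈ C := .inl ⟨(a, a'), rfl⟩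
  have hfXC (a a') : f ⁅X a, X a'⁆ = ⁅x a, x a'⁆ := by simp [map_commutatorElement, f, X]
  have hfC : f '' C ⊆ M := by
    rintro _ ⟨_, ⟨⟨a, a'⟩, rfl⟩ | ⟨t, rfl⟩, rfl⟩
    · exact hfXC a a' ▸ E.commutator_mem a a'
    · simpa [f] using hTM t.2
  have hf : Function.Surjective f := by
    rw [← MonoidHom.range_eq_top, FreeGroup.range_lift_eq_closure, Set.Sum.elim_range,
      Subtype.range_coe, htop]
  refine isFinitelyPresented_of_surjective (r := r) (deg := deg) (b := b) hf
    ((Set.finite_range _).union (Set.finite_range _)) hXC ?_ ?_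
    (conjugatesCommute_of_normal hfC r r)
  · rw [eq_top_iff, ← FreeGroup.closure_range_of]
    refine closure_mono ?_
    rintro _ ⟨a | t, rfl⟩
    exacts [.inl ⟨a, rfl⟩, .inr (.inr ⟨t, rfl⟩)]
  · rw [hfX]
    exact E.anti hfC fun a a' ↦ ⟨_, hXC a a', hfXC a a'⟩

end ExchangeSystem

end FinitePresentability

/-! ### An obstruction to finiteness of type `FP₃` -/

section CupProduct

open MonoidAlgebra (of)

variable {H E P P' : Type*} [Group H] [CommRing E]
  [AddCommGroup P] [Module (MonoidAlgebra ℤ H) P] [AddCommGroup P'] [Module (MonoidAlgebra ℤ H) P']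

/-- A crossed homomorphism from a group `H` to the `H`-module given by the character `χ`. -/
def IsCrossedHom (χ : H →* E) (u : H → E) : Prop := ∀ g h, u (g * h) = u g + χ g * u h

/-- A `ℤ`-linear functional on an `H`-module on which `H` acts through the character `ψ`. -/
def IsSemiInvariant (ψ : H →* E) (f : P →ₗ[ℤ] E) : Prop :=
  ∀ g c, f (of ℤ H g • c) = ψ g * f c

lemma IsCrossedHom.map_one {χ : H →* E} {u : H → E} (hu : IsCrossedHom χ u) : u 1 = 0 := by
  simpa using hu 1 1

/-- The action of `H` on `E` through the character `ψ`. -/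
def characterRep (ψ : H →* E) : Representation ℤ H E where
  toFun g := (LinearMap.mulLeft E (ψ g)).restrictScalars ℤ
  map_one' := by ext; simp
  map_mul' g h := by ext; simp

/-- The extension of the character `ψ` by the character `ψ * χ` given by a crossed homomorphism. -/
def crossedHomRep (ψ : H →* E) {χ : H →* E} {u : H → E} (hu : IsCrossedHom χ u) :
    Representation ℤ H (E × E) where
  toFun g := (((ψ g * χ g) • LinearMap.fst E E E + (ψ g * u g) • LinearMap.snd E E E).prod
    (ψ g • LinearMap.snd E E E)).restrictScalars ℤ
  map_one' := by ext <;> simp [hu.map_one]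
  map_mul' g h := by
    refine LinearMap.ext fun v ↦ Prod.ext ?_ ?_ <;> simp [hu g h] <;> ring

/-- An equivariant `ℤ`-linear map into a representation, as a map of modules over the group ring. -/
def equivariantLinearMap {V : Type*} [AddCommGroup V] (ρ : Representation ℤ H V) (f : P →ₗ[ℤ] V)
    (hf : ∀ g c, f (of ℤ H g • c) = ρ g (f c)) : P →ₗ[MonoidAlgebra ℤ H] ρ.asModule where
  toFun := f
  map_add' := map_add f
  map_smul' a c := by
    change f (a • c) = ρ.asAlgebraHom a (f c)
    induction a using MonoidAlgebra.induction_on with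
    | of g => rw [hf, Representation.asAlgebraHom_of]
    | add a a' ha ha' => rw [add_smul, map_add, ha, ha', map_add, LinearMap.add_apply]
    | smul n a ha => rw [smul_assoc, map_smul, ha, map_smul, LinearMap.smul_apply]

lemma exists_equivariant_lift [Module.Projective (MonoidAlgebra ℤ H) P] {V W : Type*}
    [AddCommGroup V] [AddCommGroup W] (ρ : Representation ℤ H V) (σ : Representation ℤ H W)
    {π : V →ₗ[ℤ] W} (hπ : Function.Surjective π) (hπσ : ∀ g v, π (ρ g v) = σ g (π v))
    {f : P →ₗ[ℤ] W} (hf : ∀ g c, f (of ℤ H g • c) = σ g (f c)) :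
    ∃ φ : P →ₗ[ℤ] V, (∀ g c, φ (of ℤ H g • c) = ρ g (φ c)) ∧ ∀ c, π (φ c) = f c := by
  have hof (g : H) (v : ρ.asModule) : of ℤ H g • v = ρ g v :=
    LinearMap.congr_fun (ρ.asAlgebraHom_of g) v
  obtain ⟨φ, hφ⟩ := Module.projective_lifting_property
    (equivariantLinearMap (P := ρ.asModule) σ π fun g v ↦ (hof g v).symm ▸ hπσ g v)
    (equivariantLinearMap σ f hf) hπ
  refine ⟨φ.toAddMonoidHom.toIntLinearMap, fun g c ↦ ?_, LinearMap.congr_fun hφ⟩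
  exact (map_smul φ _ _).trans (hof g (φ c))

lemma exists_cupProduct [Module.Projective (MonoidAlgebra ℤ H) P] {ψ χ : H →* E} {u : H → E}
    (hu : IsCrossedHom χ u) {f : P →ₗ[ℤ] E} (hf : IsSemiInvariant ψ f)
    {d : P' →ₗ[MonoidAlgebra ℤ H] P} (hd : ∀ c, f (d c) = 0) :
    ∃ φ : P →ₗ[ℤ] E, IsSemiInvariant (ψ * χ) (φ ∘ₗ d.restrictScalars ℤ) ∧
      ∀ g, ψ g = 1 → χ g = 1 → ∀ c, φ (of ℤ H g • c - c) = u g * f c := by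
  obtain ⟨φ, hφ, hsnd⟩ := exists_equivariant_lift (crossedHomRep ψ hu) (characterRep ψ)
    (π := LinearMap.snd ℤ E E) LinearMap.snd_surjective (fun g v ↦ rfl) hf
  have hfst (g : H) (c : P) : (φ (of ℤ H g • c)).1 =
      ψ g * χ g * (φ c).1 + ψ g * u g * f c := by
    rw [hφ, ← hsnd]; rfl
  refine ⟨LinearMap.fst ℤ E E ∘ₗ φ, fun g c ↦ ?_, fun g hψ hχ c ↦ ?_⟩
  · simp only [LinearMap.comp_apply, LinearMap.restrictScalars_apply, map_smul,
      LinearMap.fst_apply, hfst, hd, mul_zero, add_zero, MonoidHom.mul_apply]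
  · rw [map_sub, LinearMap.comp_apply, LinearMap.fst_apply, hfst, hψ, hχ]
    simp

lemma fg_range_of_isSemiInvariant_one [Module.Finite (MonoidAlgebra ℤ H) P] {f : P →ₗ[ℤ] E}
    (hf : IsSemiInvariant (1 : H →* E) f) : (LinearMap.range f).FG := by
  obtain ⟨S, hS⟩ := Module.Finite.fg_top (R := MonoidAlgebra ℤ H) (M := P)
  have hmem (c : P) : f c ∈ Submodule.span ℤ (f '' S) := by
    induction hS.ge (Submodule.mem_top (x := c)) using Submodule.span_induction with
    | mem c hc => exact Submodule.subset_span ⟨c, hc, rfl⟩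
    | zero => simp
    | add c c' _ _ hc hc' => exact map_add f c c' ▸ add_mem hc hc'
    | smul a c _ hc =>
      induction a using MonoidAlgebra.induction_on with
      | of g => rwa [hf, MonoidHom.one_apply, one_mul]
      | add a a' ha ha' => exact add_smul a a' c ▸ map_add f _ _ ▸ add_mem ha ha'
      | smul n a ha => exact smul_assoc n a c ▸ map_smul f n _ ▸ Submodule.smul_mem _ n ha
  have hrange : LinearMap.range f = Submodule.span ℤ (f '' S) :=
    le_antisymm (fun _ ⟨c, hc⟩ ↦ hc ▸ hmem c) (Submodule.span_le.2 fun _ ⟨c, _, hc⟩ ↦ ⟨c, hc⟩)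
  exact hrange ▸ Submodule.fg_span (S.finite_toSet.image f)

end CupProduct

section Koszul

open MonoidAlgebra (of)

variable {H E P₀ P₁ P₂ P₃ : Type*} [Group H] [CommRing E]
  [AddCommGroup P₀] [AddCommGroup P₁] [AddCommGroup P₂] [AddCommGroup P₃]
  [Module (MonoidAlgebra ℤ H) P₀] [Module (MonoidAlgebra ℤ H) P₁]
  [Module (MonoidAlgebra ℤ H) P₂] [Module (MonoidAlgebra ℤ H) P₃]

-- The Koszul complex of three commuting elements maps to the resolution, and evaluating the
-- iterated cup product on the image of its top generator expands the determinant.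
lemma det_mem_range_of_commute {d₃ : P₃ →ₗ[MonoidAlgebra ℤ H] P₂}
    {d₂ : P₂ →ₗ[MonoidAlgebra ℤ H] P₁} {d₁ : P₁ →ₗ[MonoidAlgebra ℤ H] P₀} {ε : P₀ →ₗ[ℤ] ℤ}
    (hε : Function.Surjective ε) (hε₁ : IsSemiInvariant (1 : H →* ℤ) ε)
    (h₁ : ∀ c, ε c = 0 → c ∈ LinearMap.range d₁) (h₂ : LinearMap.range d₂ = LinearMap.ker d₁)
    (h₃ : LinearMap.range d₃ = LinearMap.ker d₂) {g : Fin 3 → H}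
    (hg : ∀ i j, Commute (g i) (g j)) {A : Matrix (Fin 3) (Fin 3) E} {φ₀ : P₀ →ₗ[ℤ] E}
    {φ₁ : P₁ →ₗ[ℤ] E} {φ₂ : P₂ →ₗ[ℤ] E}
    (hφ₀ : ∀ j c, φ₀ (of ℤ H (g j) • c - c) = A 2 j * ε c)
    (hφ₁ : ∀ j c, φ₁ (of ℤ H (g j) • c - c) = A 1 j * φ₀ (d₁ c))
    (hφ₂ : ∀ j c, φ₂ (of ℤ H (g j) • c - c) = A 0 j * φ₁ (d₂ c)) :
    A.det ∈ LinearMap.range (φ₂ ∘ₗ d₃.restrictScalars ℤ) := by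
  have hcomm (i j : Fin 3) : of ℤ H (g i) * of ℤ H (g j) = of ℤ H (g j) * of ℤ H (g i) := by
    rw [← map_mul, hg i j, map_mul]
  obtain ⟨p, hp⟩ := hε 1
  have hx (j : Fin 3) : ∃ x, d₁ x = of ℤ H (g j) • p - p :=
    h₁ _ (by rw [map_sub, hε₁, MonoidHom.one_apply, one_mul, sub_self])
  choose x hx using hx
  have hy (i j : Fin 3) : ∃ y, d₂ y =
      (of ℤ H (g i) • x j - x j) - (of ℤ H (g j) • x i - x i) := by
    rw [← LinearMap.mem_range, h₂, LinearMap.mem_ker]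
    simp only [map_sub, map_smul, hx, smul_sub, smul_smul, hcomm i j]
    abel
  choose y hy using hy
  have hz : (of ℤ H (g 0) • y 1 2 - y 1 2) - (of ℤ H (g 1) • y 0 2 - y 0 2) +
      (of ℤ H (g 2) • y 0 1 - y 0 1) ∈ LinearMap.range d₃ := by
    rw [h₃, LinearMap.mem_ker]
    simp only [map_sub, map_add, map_smul, hy, smul_sub, smul_smul, hcomm 1 0, hcomm 2 0, hcomm 2 1]
    abel
  obtain ⟨z, hz⟩ := hz
  refine ⟨z, ?_⟩
  have hφ₀x (j : Fin 3) : φ₀ (d₁ (x j)) = A 2 j := by rw [hx, hφ₀, hp]; simp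
  have hφ₁y (i j : Fin 3) : φ₁ (d₂ (y i j)) = A 1 i * A 2 j - A 1 j * A 2 i := by
    rw [hy, map_sub, hφ₁, hφ₁, hφ₀x, hφ₀x]
  rw [LinearMap.comp_apply, LinearMap.restrictScalars_apply, hz, map_add, map_sub, hφ₂, hφ₂, hφ₂,
    hφ₁y, hφ₁y, hφ₁y, Matrix.det_fin_three]
  ring

end Koszul

theorem exists_fg_forall_det_mem_of_isTypeFP3 {H : Type} [Group H] (hFP : IsTypeFP3 H) {E : Type*}
    [CommRing E] {χ : Fin 3 → H →* E} (hχ : ∏ i, χ i = 1) {u : Fin 3 → H → E}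
    (hu : ∀ i, IsCrossedHom (χ i) (u i)) :
    ∃ N : Submodule ℤ E, N.FG ∧ ∀ g : Fin 3 → H, (∀ i j, Commute (g i) (g j)) →
      (∀ i j, χ i (g j) = 1) → (Matrix.of fun i j ↦ u i (g j)).det ∈ N := by
  let _ : Module (MonoidAlgebra ℤ H) ℤ := Module.compHom ℤ (augmentationMap H)
  obtain ⟨P₃, P₂, P₁, P₀, _, _, _, _, _, _, _, _, _, -, -, _, -, _, -, _, d₃, d₂, d₁, ε', hε, h₁,
    h₂, h₃⟩ := hFP
  let ε : P₀ →ₗ[ℤ] ℤ := ε'.toAddMonoidHom.toIntLinearMap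
  have hε₁ : IsSemiInvariant (1 : H →* ℤ) ε := fun g c ↦ by
    refine (map_smul ε' _ _).trans ?_
    change augmentationMap H _ * _ = _
    simp [augmentationMap, ε]
  have hεd (c : P₁) : ε (d₁ c) = 0 := h₁.le ⟨c, rfl⟩
  have hd₁ (c : P₂) : d₁ (d₂ c) = 0 := h₂.le ⟨c, rfl⟩
  have hd₂ (c : P₃) : d₂ (d₃ c) = 0 := h₃.le ⟨c, rfl⟩
  obtain ⟨φ₀, hφ₀, hφ₀'⟩ := exists_cupProduct (hu 2) (ψ := 1)
    (f := (Int.castAddHom E).toIntLinearMap ∘ₗ ε) (d := d₁)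
    (fun g c ↦ by simp [-MonoidAlgebra.of_apply, hε₁ g c]) (fun c ↦ by simp [hεd])
  obtain ⟨φ₁, hφ₁, hφ₁'⟩ := exists_cupProduct (hu 1) hφ₀ (d := d₂) (fun c ↦ by simp [hd₁])
  obtain ⟨φ₂, hφ₂, hφ₂'⟩ := exists_cupProduct (hu 0) hφ₁ (d := d₃) (fun c ↦ by simp [hd₂])
  have hχ' : χ 2 * χ 1 * χ 0 = 1 := by
    rw [← hχ, Fin.prod_univ_three, mul_comm, mul_comm (χ 2), mul_assoc]
  rw [one_mul, hχ'] at hφ₂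
  refine ⟨_, fg_range_of_isSemiInvariant_one hφ₂, fun g hg hχg ↦ ?_⟩
  refine det_mem_range_of_commute (φ₀ := φ₀) (φ₁ := φ₁) hε hε₁ h₁.ge h₂ h₃ hg
    (fun j c ↦ ?_) (fun j c ↦ ?_) (fun j c ↦ ?_)
  · exact hφ₀' (g j) rfl (hχg 2 j) c
  · exact hφ₁' (g j) (by simp [hχg]) (hχg 1 j) c
  · exact hφ₂' (g j) (by simp [hχg]) (hχg 0 j) c

lemma finite_of_fg_of_charP {E : Type*} [CommRing E] (p : ℕ) [NeZero p] [CharP E p]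
    {N : Submodule ℤ E} (hN : N.FG) : Finite N := by
  have : Module.Finite ℤ N := Module.Finite.iff_fg.2 hN
  refine Module.finite_of_fg_torsion N fun x ↦ ?_
  refine ⟨⟨p, mem_nonZeroDivisors_of_ne_zero (Nat.cast_ne_zero.2 (NeZero.ne p))⟩, Subtype.ext ?_⟩
  simp

/-! ### Binomials in powers of linear forms -/

section Binomial

/-- The product of the powers `l i ^ μ i` over the indices at which the exponent is positive. -/
def posProd {ι S : Type*} [Fintype ι] [CommMonoid S] (l : ι → S) (μ : ι → ℤ) : S :=
  ∏ i, l i ^ (μ i).toNat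

/-- The binomial `∏ l i ^ (μ i)⁺ - ∏ l i ^ (μ i)⁻`, the numerator of `∏ l i ^ μ i - 1`. -/
def powBinomial {ι S : Type*} [Fintype ι] [CommRing S] (l : ι → S) (μ : ι → ℤ) : S :=
  posProd l μ - posProd l (-μ)

variable {ι S T k σ : Type*} [Fintype ι] [CommRing S] [CommRing T] [Field k]

lemma map_posProd (τ : S →+* T) (l : ι → S) (μ : ι → ℤ) :
    τ (posProd l μ) = posProd (τ ∘ l) μ := by
  simp [posProd]

lemma posProd_eq_zero_iff [IsDomain S] {l : ι → S} {μ : ι → ℤ} :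
    posProd l μ = 0 ↔ ∃ i, 0 < μ i ∧ l i = 0 := by
  simp [posProd, Finset.prod_eq_zero_iff, pow_eq_zero_iff', and_comm]

lemma exists_dvd_of_prime_dvd_posProd {r : S} (hr : Prime r) {l : ι → S} {μ : ι → ℤ}
    (h : r ∣ posProd l μ) : ∃ i, 0 < μ i ∧ r ∣ l i := by
  obtain ⟨i, -, hi⟩ := (hr.dvd_finsetProd_iff _).1 h
  refine ⟨i, ?_, hr.dvd_of_dvd_pow hi⟩
  by_contra hμ
  rw [Int.toNat_of_nonpos (not_lt.1 hμ), pow_zero] at hi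
  exact hr.not_isUnit (isUnit_of_dvd_one hi)

lemma powBinomial_neg (l : ι → S) (μ : ι → ℤ) : powBinomial l (-μ) = -powBinomial l μ := by
  simp [powBinomial]

lemma prod_zpow_mul_posProd_neg (l : ι → Sˣ) (μ : ι → ℤ) :
    (∏ i, l i ^ μ i) * posProd l (-μ) = posProd l μ := by
  simp only [posProd, ← Finset.prod_mul_distrib]
  refine Finset.prod_congr rfl fun i _ ↦ ?_
  rw [← zpow_natCast, ← zpow_natCast, ← zpow_add]
  congr 1
  simp only [Pi.neg_apply]
  omega

lemma map_posProd_units (l : ι → Sˣ) (μ : ι → ℤ) :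
    ((posProd l μ : Sˣ) : S) = posProd (fun i ↦ (l i : S)) μ := by
  simp [posProd]

lemma powBinomial_units (l : ι → Sˣ) (μ : ι → ℤ) :
    powBinomial (fun i ↦ (l i : S)) μ = (↑(∏ i, l i ^ μ i) - 1) * ↑(posProd l (-μ)) := by
  rw [powBinomial, ← map_posProd_units, ← map_posProd_units, ← prod_zpow_mul_posProd_neg l μ,
    Units.val_mul, sub_mul, one_mul]

lemma exists_addSubgroup_dvd_powBinomial {f : S} (hf : Prime f) {l : ι → S}
    (hl : ∀ i, ¬ f ∣ l i) :
    ∃ N : AddSubgroup (ι → ℤ), ∀ μ, μ ∈ N ↔ f ∣ powBinomial l μ := by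
  have hprime : (Ideal.span {f}).IsPrime := (Ideal.span_singleton_prime hf.ne_zero).2 hf
  let q : S →+* FractionRing (S ⧸ Ideal.span {f}) :=
    (algebraMap _ _).comp (Ideal.Quotient.mk (Ideal.span {f}))
  have hq (x : S) : q x = 0 ↔ f ∣ x := by
    rw [← Ideal.mem_span_singleton, ← Ideal.Quotient.eq_zero_iff_mem]
    simp [q]
  let u (i : ι) := Units.mk0 (q (l i)) (mt (hq _).1 (hl i))
  let powHom : (ι → ℤ) →+ Additive (FractionRing (S ⧸ Ideal.span {f}))ˣ :=
    AddMonoidHom.mk' (fun μ ↦ .ofMul (∏ i, u i ^ μ i)) fun μ ν ↦ by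
      simp [zpow_add, Finset.prod_mul_distrib]
  refine ⟨powHom.ker, fun μ ↦ ?_⟩
  have hmap : q (powBinomial l μ) = (↑(∏ i, u i ^ μ i) - 1) * ↑(posProd u (-μ)) := by
    rw [← powBinomial_units, powBinomial, map_sub, map_posProd, map_posProd]
    rfl
  rw [← hq, hmap, Units.mul_left_eq_zero, sub_eq_zero, Units.val_eq_one]
  rfl

lemma exists_pos_iff_exists_neg_of_dvd_powBinomial [IsDomain T] {f : S} {l : ι → S} {μ : ι → ℤ}
    (h : f ∣ powBinomial l μ) {τ : S →+* T} (hτ : τ f = 0) :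
    (∃ i, 0 < μ i ∧ τ (l i) = 0) ↔ ∃ i, μ i < 0 ∧ τ (l i) = 0 := by
  have heq : τ (posProd l μ) = τ (posProd l (-μ)) := by
    rw [← sub_eq_zero, ← map_sub]
    exact zero_dvd_iff.1 (hτ ▸ map_dvd τ h)
  simpa [map_posProd, posProd_eq_zero_iff] using congrArg (· = 0) heq

lemma exists_prime_dvd_map_eq_zero [IsDomain S] [UniqueFactorizationMonoid S] [IsDomain T]
    (τ : S →+* T) {x : S} (hx0 : x ≠ 0) (hx : τ x = 0) : ∃ r, Prime r ∧ r ∣ x ∧ τ r = 0 := by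
  induction x using UniqueFactorizationMonoid.induction_on_prime with
  | h₁ => exact absurd rfl hx0
  | h₂ u hu => exact absurd (hx ▸ hu.map τ) not_isUnit_zero
  | h₃ a p ha hp ih =>
    rcases mul_eq_zero.1 ((map_mul τ p a).symm.trans hx) with hp0 | ha0
    · exact ⟨p, hp, dvd_mul_right p a, hp0⟩
    · obtain ⟨r, hr, hra, hr0⟩ := ih ha ha0
      exact ⟨r, hr, hra.mul_left p, hr0⟩

-- A factor with nonzero constant term leaves the order to the cofactor, which then carries the
-- whole degree as well.
open MvPolynomial in
lemma constantCoeff_eq_zero_of_dvd_isHomogeneous {f p : MvPolynomial σ k} {d : ℕ}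
    (hp : p.IsHomogeneous d) (hp0 : p ≠ 0) (hfp : f ∣ p) (hf : ¬ IsUnit f) :
    constantCoeff f = 0 := by
  obtain ⟨g, rfl⟩ := hfp
  have hf0 := left_ne_zero_of_mul hp0
  have hg0 := right_ne_zero_of_mul hp0
  by_contra hconst
  have order_f : (f : MvPowerSeries σ k).order = 0 := by
    by_contra h
    rw [← ne_eq, MvPowerSeries.order_ne_zero_iff_constCoeff_eq_zero,
      ← MvPowerSeries.coeff_zero_eq_constantCoeff_apply, coeff_coe] at h
    exact hconst h
  have le_order_g : (d : ℕ∞) ≤ (g : MvPowerSeries σ k).order := by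
    rw [← zero_add (MvPowerSeries.order _), ← order_f, ← MvPowerSeries.order_mul, ← coe_mul]
    exact MvPowerSeries.nat_le_order fun e he ↦ (coeff_coe _ e).trans (hp.coeff_eq_zero he.ne)
  obtain ⟨e, he⟩ := ne_zero_iff.1 hg0
  have le_degree : d ≤ e.degree := by
    exact_mod_cast le_order_g.trans (MvPowerSeries.order_le ((coeff_coe g e).trans_ne he))
  have degree_le : e.degree ≤ g.totalDegree := le_totalDegree (mem_support_iff.2 he)
  have degree_mul := totalDegree_mul_of_isDomain hf0 hg0
  rw [hp.totalDegree hp0] at degree_mul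
  exact hf (isUnit_iff_totalDegree_of_isReduced.2 ⟨isUnit_iff_ne_zero.2 hconst, by omega⟩)

end Binomial

section MomentForm

open MvPolynomial

variable {k : Type*} [Field k]

/-- The linear form `X₀ + s X₁ + ⋯ + sⁿ⁻¹ Xₙ₋₁`, the value at `s` of the generic polynomial. -/
noncomputable def momentForm (n : ℕ) (s : k) : MvPolynomial (Fin n) k :=
  ∑ j : Fin n, C (s ^ (j : ℕ)) * X j

/-- The generic polynomial `X₀ + X₁ T + ⋯ + Xₙ₋₁ Tⁿ⁻¹`. -/
noncomputable def genericPoly (k : Type*) [Field k] (n : ℕ) : Polynomial (MvPolynomial (Fin n) k) :=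
  ∑ j : Fin n, Polynomial.monomial j (X j)

/-- The restriction to the hyperplane `momentForm (n + 1) c = 0`, whose points are the coefficient
vectors of the polynomials `p * (T - c)` with `deg p < n`. -/
noncomputable def restrictToHyperplane {n : ℕ} (c : k) :
    MvPolynomial (Fin (n + 1)) k →ₐ[k] MvPolynomial (Fin n) k :=
  aeval fun j ↦ (genericPoly k n * (Polynomial.X - Polynomial.C (C c))).coeff j

lemma eval_genericPoly (n : ℕ) (s : k) : (genericPoly k n).eval (C s) = momentForm n s := by
  simp [genericPoly, momentForm, Polynomial.eval_finsetSum, mul_comm]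

lemma coeff_genericPoly {n : ℕ} (j : Fin n) : (genericPoly k n).coeff j = X j := by
  simp [genericPoly, Polynomial.coeff_monomial, Fin.val_inj]

lemma coeff_genericPoly_of_le {n j : ℕ} (h : n ≤ j) : (genericPoly k n).coeff j = 0 := by
  simp only [genericPoly, Polynomial.finsetSum_coeff, Polynomial.coeff_monomial]
  exact Finset.sum_eq_zero fun i _ ↦ if_neg (i.2.trans_le h).ne

lemma map_restrictToHyperplane_genericPoly (n : ℕ) (c : k) :
    (genericPoly k (n + 1)).map (restrictToHyperplane c).toRingHom =
      genericPoly k n * (Polynomial.X - Polynomial.C (C c)) := by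
  refine Polynomial.ext fun j ↦ ?_
  rw [Polynomial.coeff_map]
  obtain hj | hj := lt_or_ge j (n + 1)
  · exact (congrArg _ (coeff_genericPoly ⟨j, hj⟩)).trans (aeval_X _ _)
  · obtain ⟨i, rfl⟩ := Nat.exists_eq_add_of_le' (Nat.one_le_of_lt hj)
    rw [Polynomial.coeff_mul_X_sub_C, coeff_genericPoly_of_le hj, map_zero,
      coeff_genericPoly_of_le (Nat.le_of_succ_le_succ hj),
      coeff_genericPoly_of_le (Nat.le_of_succ_le hj), zero_mul, sub_zero]

lemma restrictToHyperplane_momentForm (n : ℕ) (c s : k) :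
    restrictToHyperplane c (momentForm (n + 1) s) = C (s - c) * momentForm n s := by
  have h := Polynomial.eval_map_apply (restrictToHyperplane (n := n) c).toRingHom (C s)
    (p := genericPoly k (n + 1))
  have hC : (restrictToHyperplane (n := n) c).toRingHom (C s) = C s :=
    (restrictToHyperplane c).commutes s
  rw [map_restrictToHyperplane_genericPoly, hC, eval_genericPoly, Polynomial.eval_mul,
    eval_genericPoly, Polynomial.eval_sub, Polynomial.eval_X, Polynomial.eval_C, ← C_sub] at h
  exact h.symm.trans (mul_comm _ _)

lemma restrictToHyperplane_comm {n : ℕ} (a b : k) (f : MvPolynomial (Fin (n + 2)) k) :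
    restrictToHyperplane a (restrictToHyperplane b f) =
      restrictToHyperplane (n := n) b (restrictToHyperplane a f) := by
  have map_generic (a b : k) : (genericPoly k (n + 2)).map
      ((restrictToHyperplane a).toRingHom.comp (restrictToHyperplane b).toRingHom) =
      genericPoly k n * (Polynomial.X - Polynomial.C (C a)) *
        (Polynomial.X - Polynomial.C (C b)) := by
    have hC : (restrictToHyperplane (n := n) a).toRingHom (C b) = C b :=
      (restrictToHyperplane a).commutes b
    rw [← Polynomial.map_map, map_restrictToHyperplane_genericPoly,
      Polynomial.map_mul, map_restrictToHyperplane_genericPoly, Polynomial.map_sub,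
      Polynomial.map_X, Polynomial.map_C, hC]
  suffices (restrictToHyperplane a).comp (restrictToHyperplane b) =
      (restrictToHyperplane (n := n) b).comp (restrictToHyperplane a) from DFunLike.congr_fun this f
  refine MvPolynomial.algHom_ext fun j ↦ ?_
  rw [← coeff_genericPoly]
  have h := congrArg (Polynomial.coeff · j) ((map_generic a b).trans
    ((mul_right_comm _ _ _).trans (map_generic b a).symm))
  simp only [Polynomial.coeff_map] at h
  exact h

lemma momentForm_ne_zero (n : ℕ) (s : k) : momentForm (n + 1) s ≠ 0 := by
  intro h
  simpa [momentForm, Pi.single_apply] using congrArg (eval (Pi.single 0 1)) h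

lemma isHomogeneous_momentForm (n : ℕ) (s : k) : (momentForm n s).IsHomogeneous 1 :=
  IsHomogeneous.sum _ _ _ fun _ _ ↦ isHomogeneous_C_mul_X _ _

lemma constantCoeff_restrictToHyperplane {n : ℕ} (c : k) (f : MvPolynomial (Fin (n + 1)) k) :
    constantCoeff (restrictToHyperplane c f) = constantCoeff f := by
  have h : (constantCoeff (σ := Fin n)).comp (restrictToHyperplane c).toRingHom =
      constantCoeff (R := k) := by
    refine MvPolynomial.ringHom_ext (fun a ↦ ?_) fun j ↦ ?_
    · exact (congrArg constantCoeff ((restrictToHyperplane c).commutes a)).trans (by simp)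
    · have hgeneric : (genericPoly k n).map constantCoeff = 0 := by
        simp [genericPoly, Polynomial.map_sum]
      have hX : restrictToHyperplane c (X j) = _ := aeval_X _ j
      rw [constantCoeff_X, RingHom.comp_apply, AlgHom.toRingHom_eq_coe, RingHom.coe_coe, hX,
        ← Polynomial.coeff_map, Polynomial.map_mul, hgeneric, zero_mul, Polynomial.coeff_zero]
  exact DFunLike.congr_fun h f

lemma prime_momentForm (n : ℕ) (s : k) : Prime (momentForm (n + 1) s) := by
  refine (irreducible_of_totalDegree_eq_one
    ((isHomogeneous_momentForm _ s).totalDegree (momentForm_ne_zero n s)) fun x hx ↦ ?_).prime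
  refine isUnit_iff_ne_zero.2 fun hx0 ↦ momentForm_ne_zero n s (MvPolynomial.ext _ _ fun d ↦ ?_)
  simpa [hx0] using hx d

variable {ι : Type*} [Fintype ι] {t : ι → k}

lemma isHomogeneous_posProd_momentForm (n : ℕ) (t : ι → k) (μ : ι → ℤ) :
    (posProd (momentForm n ∘ t) μ).IsHomogeneous (∑ i, (μ i).toNat) :=
  IsHomogeneous.prod _ _ _ fun i _ ↦ by
    simpa using (isHomogeneous_momentForm n (t i)).pow (μ i).toNat

lemma isHomogeneous_powBinomial_momentForm (n : ℕ) (t : ι → k) {μ : ι → ℤ} (hμ : ∑ i, μ i = 0) :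
    (powBinomial (momentForm n ∘ t) μ).IsHomogeneous (∑ i, (μ i).toNat) := by
  have degree_eq : ∑ i, ((-μ) i).toNat = ∑ i, (μ i).toNat := by
    zify
    rw [← sub_eq_zero, ← Finset.sum_sub_distrib, ← neg_eq_zero.2 hμ, ← Finset.sum_neg_distrib]
    exact Finset.sum_congr rfl fun i _ ↦ by simp only [Pi.neg_apply]; omega
  exact (isHomogeneous_posProd_momentForm n t μ).sub
    (degree_eq ▸ isHomogeneous_posProd_momentForm n t (-μ))

section Divisor

variable {n : ℕ} {f : MvPolynomial (Fin (n + 2)) k} {μ : ι → ℤ}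

lemma restrictToHyperplane_ne_zero_of_dvd_powBinomial (ht : Function.Injective t)
    (hf : f ∣ powBinomial (momentForm (n + 2) ∘ t) μ) {i : ι} (hi : μ i ≠ 0) :
    restrictToHyperplane (t i) f ≠ 0 := by
  intro h0
  have pos_iff_neg : 0 < μ i ↔ μ i < 0 := by
    simpa [restrictToHyperplane_momentForm, momentForm_ne_zero, sub_eq_zero, ht.eq_iff] using
      exists_pos_iff_exists_neg_of_dvd_powBinomial hf
        (τ := (restrictToHyperplane (t i)).toRingHom) h0
  omega

lemma powBinomial_momentForm_ne_zero (ht : Function.Injective t) (hμ : μ ≠ 0) :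
    powBinomial (momentForm (n + 2) ∘ t) μ ≠ 0 := by
  obtain ⟨i, hi⟩ := Function.ne_iff.1 hμ
  intro h0
  exact restrictToHyperplane_ne_zero_of_dvd_powBinomial ht (dvd_zero _ |>.trans h0.symm.dvd) hi
    (map_zero _)

end Divisor

section Prime

variable {n : ℕ} {f : MvPolynomial (Fin (n + 3)) k} {μ : ι → ℤ}

lemma eq_zero_iff_eq_zero_of_restrictToHyperplane_eq_zero (ht : Function.Injective t)
    (hf : f ∣ powBinomial (momentForm (n + 3) ∘ t) μ) {i j : ι}
    (h0 : restrictToHyperplane (t j) (restrictToHyperplane (t i) f) = 0) : μ i = 0 ↔ μ j = 0 := by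
  have vanish_iff (l : ι) : restrictToHyperplane (t j)
      (restrictToHyperplane (t i) (momentForm (n + 3) (t l))) = 0 ↔ l = i ∨ l = j := by
    simp [restrictToHyperplane_momentForm, momentForm_ne_zero, sub_eq_zero, ht.eq_iff]
  have pos_iff_neg : (0 < μ i ∨ 0 < μ j) ↔ (μ i < 0 ∨ μ j < 0) := by
    simpa [vanish_iff, and_or_left, exists_or] using
      exists_pos_iff_exists_neg_of_dvd_powBinomial hf
        (τ := ((restrictToHyperplane (t j)).comp (restrictToHyperplane (t i))).toRingHom) h0
  omega

-- On the hyperplane `momentForm (t i) = 0` one term of the binomial vanishes, so there the prime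
-- factors of `f` are among the remaining forms.
lemma exists_associated_momentForm_of_prime_dvd (ht : Function.Injective t)
    (hf : f ∣ powBinomial (momentForm (n + 3) ∘ t) μ) {i : ι} (hi : μ i ≠ 0)
    {r : MvPolynomial (Fin (n + 2)) k} (hr : Prime r) (hrf : r ∣ restrictToHyperplane (t i) f) :
    ∃ j, Associated r (momentForm (n + 2) (t j)) := by
  wlog hpos : 0 < μ i generalizing μ
  · exact this (powBinomial_neg (momentForm (n + 3) ∘ t) μ ▸ (dvd_neg.2 hf)) (neg_ne_zero.2 hi)
      (by simp only [Pi.neg_apply]; omega)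
  set ρ := restrictToHyperplane (n := n + 2) (t i)
  have map_form (j : ι) : ρ (momentForm (n + 3) (t j)) = C (t j - t i) * momentForm (n + 2) (t j) :=
    restrictToHyperplane_momentForm _ _ _
  have posProd_eq_zero : ρ.toRingHom (posProd (momentForm (n + 3) ∘ t) μ) = 0 := by
    rw [map_posProd, posProd_eq_zero_iff]
    exact ⟨i, hpos, (map_form i).trans (by simp)⟩
  have hdvd : r ∣ ρ.toRingHom (posProd (momentForm (n + 3) ∘ t) (-μ)) := by
    have h := hrf.trans (map_dvd ρ.toRingHom hf)
    rwa [powBinomial, map_sub, posProd_eq_zero, zero_sub, dvd_neg] at h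
  rw [map_posProd] at hdvd
  obtain ⟨j, hj, hrj⟩ := exists_dvd_of_prime_dvd_posProd hr hdvd
  have hji : t j - t i ≠ 0 := sub_ne_zero.2 fun h ↦ by
    rw [ht h, Pi.neg_apply] at hj
    omega
  refine ⟨j, hr.associated_of_dvd (prime_momentForm _ _) ?_⟩
  exact ((hji.isUnit.map C).dvd_mul_left).1 (hrj.trans (map_form j).dvd)

lemma exists_restrictToHyperplane_eq_zero {T : Type*} [CommRing T] [IsDomain T]
    (ht : Function.Injective t) (hf : f ∣ powBinomial (momentForm (n + 3) ∘ t) μ) {i : ι}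
    (hi : μ i ≠ 0) {τ : MvPolynomial (Fin (n + 2)) k →+* T}
    (hτ : τ (restrictToHyperplane (t i) f) = 0) :
    ∃ j, restrictToHyperplane (t j) (restrictToHyperplane (t i) f) = 0 ∧
      τ (momentForm (n + 2) (t j)) = 0 := by
  obtain ⟨r, hr, hrf, hτr⟩ := exists_prime_dvd_map_eq_zero τ
    (restrictToHyperplane_ne_zero_of_dvd_powBinomial ht hf hi) hτ
  obtain ⟨j, hj⟩ := exists_associated_momentForm_of_prime_dvd ht hf hi hr hrf
  refine ⟨j, ?_, zero_dvd_iff.1 (hτr ▸ map_dvd τ hj.dvd)⟩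
  have hdvd := map_dvd (restrictToHyperplane (t j)) (hj.symm.dvd.trans hrf)
  rwa [restrictToHyperplane_momentForm, sub_self, C_0, zero_mul, zero_dvd_iff] at hdvd

end Prime

theorem exists_int_relation_of_prime_dvd_powBinomial {n : ℕ} {f : MvPolynomial (Fin (n + 4)) k}
    (hf : Prime f) (ht : Function.Injective t) (hft : ∀ i, ¬ f ∣ momentForm (n + 4) (t i))
    {κ κ' : ι → ℤ} (hκ : ∑ i, κ i = 0) (h : f ∣ powBinomial (momentForm (n + 4) ∘ t) κ)
    (h' : f ∣ powBinomial (momentForm (n + 4) ∘ t) κ') :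
    ∃ a b : ℤ, (a ≠ 0 ∨ b ≠ 0) ∧ a • κ + b • κ' = 0 := by
  by_cases hκ0 : κ = 0
  · exact ⟨1, 0, .inl one_ne_zero, by simp [hκ0]⟩
  obtain ⟨i, hi⟩ := Function.ne_iff.1 hκ0
  set μ := κ' i • κ + (-κ i) • κ' with hμ
  by_contra! hindep
  obtain ⟨m, hm⟩ := Function.ne_iff.1 (hindep (κ' i) (-κ i) (.inr (neg_ne_zero.2 hi)))
  have hμi : μ i = 0 := by simp [hμ, mul_comm]
  have hfμ : f ∣ powBinomial (momentForm (n + 4) ∘ t) μ := by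
    obtain ⟨N, hN⟩ := exists_addSubgroup_dvd_powBinomial hf hft
    exact (hN _).1 (add_mem (N.zsmul_mem ((hN _).2 h) _) (N.zsmul_mem ((hN _).2 h') _))
  have hconst : constantCoeff f = 0 := constantCoeff_eq_zero_of_dvd_isHomogeneous
    (isHomogeneous_powBinomial_momentForm _ t hκ) (powBinomial_momentForm_ne_zero ht hκ0) h
    hf.not_isUnit
  obtain ⟨l, hl, -⟩ := exists_restrictToHyperplane_eq_zero ht hfμ hm (τ := constantCoeff)
    ((constantCoeff_restrictToHyperplane _ _).trans hconst)
  have hμl : μ l ≠ 0 := fun h0 ↦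
    hm ((eq_zero_iff_eq_zero_of_restrictToHyperplane_eq_zero ht hfμ hl).2 h0)
  obtain ⟨j, hj, hjτ⟩ := exists_restrictToHyperplane_eq_zero ht h hi
    (τ := ((restrictToHyperplane (n := n + 1) (t l)).comp
      (restrictToHyperplane (n := n + 2) (t m))).toRingHom) (by
    change restrictToHyperplane (t l) (restrictToHyperplane (t m) _) = 0
    rw [restrictToHyperplane_comm (t m), restrictToHyperplane_comm (t l), hl, map_zero])
  have hμj : μ j = 0 := (eq_zero_iff_eq_zero_of_restrictToHyperplane_eq_zero ht hfμ hj).1 hμi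
  have hjlm : j = m ∨ j = l := by
    simpa [restrictToHyperplane_momentForm, momentForm_ne_zero, sub_eq_zero, ht.eq_iff] using hjτ
  rcases hjlm with rfl | rfl
  · exact hm hμj
  · exact hμl hμj

end MomentForm

/-! ### Abelian normal subgroups on which conjugation is scalar -/

section ScalarConjugation

open Subgroup
open scoped commutatorElement

variable {Γ Γ' R V ι : Type*} [Group Γ] [Group Γ'] [CommRing R] [AddCommGroup V] [Module R V]

/-- The map `v` embeds the subgroup `M` additively into an `R`-module so that conjugation by `g`
becomes multiplication by the unit `q g`. -/
structure ScalarConjugation (q : Γ →* Rˣ) (M : Subgroup Γ) (v : Γ → V) : Prop where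
  conj_mem : ∀ g, ∀ c ∈ M, g * c * g⁻¹ ∈ M
  injOn : Set.InjOn v M
  map_mul : ∀ c ∈ M, ∀ d ∈ M, v (c * d) = v c + v d
  map_conj : ∀ g, ∀ c ∈ M, v (g * c * g⁻¹) = (q g : R) • v c

/-- The family `g` generates the group, which is abelian modulo `M`, and every `q (g i)` is an
integral combination of any `r` of them. -/
structure SpanningFamily (q : Γ →* Rˣ) (M : Subgroup Γ) (r : ℕ) (g : ι → Γ) : Prop where
  closure_eq_top : closure (Set.range g) = ⊤
  commutator_le : commutator Γ ≤ M
  mem_closure : ∀ S : Finset ι, S.card = r → ∀ i,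
    (q (g i) : R) ∈ AddSubgroup.closure ((fun j ↦ (q (g j) : R)) '' S)

lemma list_prod_mem_closure {f : ι → R} {S : Set ι} {L : List R}
    (hL : ∀ a ∈ L, a ∈ AddSubgroup.closure (f '' S)) :
    L.prod ∈ AddSubgroup.closure
      ((fun u : List ι ↦ (u.map f).prod) '' {u | u.length = L.length ∧ ∀ i ∈ u, i ∈ S}) := by
  induction L with
  | nil => exact AddSubgroup.subset_closure ⟨[], by simp⟩
  | cons a L ih =>
    rw [List.forall_mem_cons] at hL
    set N := AddSubgroup.closure
      ((fun u : List ι ↦ (u.map f).prod) '' {u | u.length = (a :: L).length ∧ ∀ i ∈ u, i ∈ S})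
    have hmul_mem {i : ι} (hi : i ∈ S) : f i * L.prod ∈ N := by
      refine (AddSubgroup.closure_le (N.comap (AddMonoidHom.mulLeft (f i)))).2 ?_ (ih hL.2)
      rintro _ ⟨u, ⟨hlen, hu⟩, rfl⟩
      exact AddSubgroup.subset_closure ⟨i :: u, ⟨by simp [hlen], List.forall_mem_cons.2 ⟨hi, hu⟩⟩,
        List.prod_cons⟩
    rw [List.prod_cons]
    refine (AddSubgroup.closure_le (N.comap (AddMonoidHom.mulRight L.prod))).2 ?_ hL.1
    rintro _ ⟨i, hi, rfl⟩
    exact hmul_mem hi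

namespace ScalarConjugation

variable {q : Γ →* Rˣ} {M : Subgroup Γ} {v : Γ → V}

lemma normal (h : ScalarConjugation q M v) : M.Normal := ⟨fun c hc g ↦ h.conj_mem g c hc⟩

lemma isMulCommutative (h : ScalarConjugation q M v) : IsMulCommutative M :=
  ⟨⟨fun c d ↦ Subtype.ext <| h.injOn (mul_mem c.2 d.2) (mul_mem d.2 c.2) <|
    (h.map_mul _ c.2 _ d.2).trans <| (add_comm _ _).trans (h.map_mul _ d.2 _ c.2).symm⟩⟩

lemma map_one (h : ScalarConjugation q M v) : v 1 = 0 := by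
  simpa using h.map_mul 1 (one_mem M) 1 (one_mem M)

lemma map_inv (h : ScalarConjugation q M v) {c : Γ} (hc : c ∈ M) : v c⁻¹ = -v c := by
  rw [eq_neg_iff_add_eq_zero, ← h.map_mul _ (inv_mem hc) _ hc, inv_mul_cancel, h.map_one]

lemma pow_eq_one (h : ScalarConjugation q M v) {p : ℕ} [CharP R p] {c : Γ} (hc : c ∈ M) :
    c ^ p = 1 := by
  have hpow (n : ℕ) : v (c ^ n) = (n : R) • v c := by
    induction n with
    | zero => simp [h.map_one]
    | succ n ih =>
      rw [pow_succ, h.map_mul _ (pow_mem hc n) _ hc, ih, Nat.cast_succ, add_smul, one_smul]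
  exact h.injOn (pow_mem hc p) (one_mem M) (by rw [hpow, CharP.cast_eq_zero, zero_smul, h.map_one])

lemma comap (h : ScalarConjugation q M v) {f : Γ' →* Γ} (hf : Function.Injective f) :
    ScalarConjugation (q.comp f) (M.comap f) (v ∘ f) where
  conj_mem g c hc := by simpa using h.conj_mem (f g) (f c) hc
  injOn := h.injOn.comp hf.injOn fun _ hc ↦ hc
  map_mul c hc d hd := by simpa using h.map_mul (f c) hc (f d) hd
  map_conj g c hc := by simpa using h.map_conj (f g) (f c) hc

lemma exists_mem_closure_map_eq_smul (h : ScalarConjugation q M v) {c : Γ} (hc : c ∈ M)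
    {Y : Set Γ} {a : R} (ha : a ∈ AddSubgroup.closure ((fun y ↦ (q y : R)) '' Y)) :
    ∃ z ∈ M, z ∈ closure ((fun y ↦ y * c * y⁻¹) '' Y) ∧ v z = a • v c := by
  induction ha using AddSubgroup.closure_induction with
  | mem a ha =>
    obtain ⟨y, hy, rfl⟩ := ha
    exact ⟨_, h.conj_mem y c hc, subset_closure ⟨y, hy, rfl⟩, h.map_conj y c hc⟩
  | zero => exact ⟨1, one_mem _, one_mem _, by rw [h.map_one, zero_smul]⟩
  | add a b _ _ iha ihb =>
    obtain ⟨y, hyM, hy, hva⟩ := iha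
    obtain ⟨z, hzM, hz, hvb⟩ := ihb
    exact ⟨y * z, mul_mem hyM hzM, mul_mem hy hz, by rw [h.map_mul y hyM z hzM, hva, hvb, add_smul]⟩
  | neg a _ ih =>
    obtain ⟨y, hyM, hy, hva⟩ := ih
    exact ⟨y⁻¹, inv_mem hyM, inv_mem hy, by rw [h.map_inv hyM, hva, neg_smul]⟩

lemma conj_mem_closure (h : ScalarConjugation q M v) {c : Γ} (hc : c ∈ M) {Y : Set Γ} {x : Γ}
    (hx : (q x : R) ∈ AddSubgroup.closure ((fun y ↦ (q y : R)) '' Y)) :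
    x * c * x⁻¹ ∈ closure ((fun y ↦ y * c * y⁻¹) '' Y) := by
  obtain ⟨z, hzM, hz, hvz⟩ := h.exists_mem_closure_map_eq_smul hc hx
  rwa [h.injOn (h.conj_mem x c hc) hzM (by rw [h.map_conj x c hc, hvz])]

lemma exists_mem_map_eq_smul (h : ScalarConjugation q M v) {c : Γ} (hc : c ∈ M) {a : R}
    (ha : a ∈ Subring.closure (Set.range fun g ↦ (q g : R))) : ∃ z ∈ M, v z = a • v c := by
  have hrange : (Submonoid.closure (Set.range fun g ↦ (q g : R)) : Set R) =
      (fun g ↦ (q g : R)) '' Set.univ := by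
    rw [Set.image_univ]
    exact congrArg SetLike.coe (Submonoid.closure_eq (MonoidHom.mrange ((Units.coeHom R).comp q)))
  rw [Subring.mem_closure_iff, hrange] at ha
  obtain ⟨z, hzM, -, hz⟩ := h.exists_mem_closure_map_eq_smul hc ha
  exact ⟨z, hzM, hz⟩

lemma mul_mem_addSubgroup_closure {Y : Set Γ} {x : Γ} (z : Γ)
    (hx : (q x : R) ∈ AddSubgroup.closure ((fun y ↦ (q y : R)) '' Y)) :
    (q (x * z) : R) ∈ AddSubgroup.closure ((fun y ↦ (q y : R)) '' ((· * z) '' Y)) := by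
  set N := AddSubgroup.closure ((fun y ↦ (q y : R)) '' ((· * z) '' Y))
  rw [_root_.map_mul, Units.val_mul]
  refine (AddSubgroup.closure_le (N.comap (AddMonoidHom.mulRight (q z : R)))).2 ?_ hx
  rintro _ ⟨y, hy, rfl⟩
  exact AddSubgroup.subset_closure ⟨y * z, ⟨y, hy, rfl⟩, by simp⟩

lemma conj_mem_of_mem_addSubgroup_closure (h : ScalarConjugation q M v) {c x : Γ} (hc : c ∈ M)
    {D : Subgroup Γ} (hcD : c ∈ D) {Y : Set Γ} (hY : Y ⊆ D)
    (hx : (q x : R) ∈ AddSubgroup.closure ((fun y ↦ (q y : R)) '' Y)) : x * c * x⁻¹ ∈ D := by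
  refine (closure_le D).2 ?_ (h.conj_mem_closure hc hx)
  rintro _ ⟨y, hy, rfl⟩
  exact mul_mem (mul_mem (hY hy) hcD) (inv_mem (hY hy))

lemma exchangeSystem (h : ScalarConjugation q M v) {A I : Type*} [Fintype I] {r : ℕ}
    {deg : A → ℕ} {b : I → A} {x : A → Γ} (hr : 2 * r ≤ Fintype.card I + 1) (hdeg : ∀ a, 0 < deg a)
    (hb : ∀ i, deg (b i) = 1) (hone : ∃ i, x (b i) = 1) (hx : ∀ a a', ⁅x a, x a'⁆ ∈ M)
    (hspan : ∀ a, ∃ L : List R, L.length = deg a ∧ (q (x a) : R) = L.prod ∧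
      ∀ S : Finset I, S.card = r →
        ∀ y ∈ L, y ∈ AddSubgroup.closure ((fun i ↦ (q (x (b i)) : R)) '' S)) :
    ExchangeSystem r deg b x (M : Set Γ) where
  two_mul_le_card := hr
  deg_pos := hdeg
  deg_base := hb
  exists_base_eq_one := hone
  commutator_mem := hx
  exchange a c hc S hS := by
    obtain ⟨L, hlen, hqL, hL⟩ := hspan a
    have hqx : (q (x a) : R) ∈ AddSubgroup.closure ((fun y ↦ (q y : R)) ''
        ((fun u : List I ↦ (u.map (x ∘ b)).prod) '' {u | u.length = deg a ∧ ∀ i ∈ u, i ∈ S})) := by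
      rw [Set.image_image, hqL, ← hlen]
      have hval (u : List I) :
          (q (u.map (x ∘ b)).prod : R) = (u.map fun i ↦ (q (x (b i)) : R)).prod :=
        (map_list_prod ((Units.coeHom R).comp q) _).trans (by rw [List.map_map]; rfl)
      simp only [hval]
      exact list_prod_mem_closure (hL S hS)
    simpa only [conjWord_apply, List.map_singleton, List.prod_singleton, Set.image_image,
      List.map_map] using h.conj_mem_closure hc hqx

end ScalarConjugation

namespace SpanningFamily

variable {q : Γ →* Rˣ} {M : Subgroup Γ} {v : Γ → V} {r : ℕ} {g : ι → Γ}

lemma commutator_mem (hg : SpanningFamily q M r g) (x y : Γ) : ⁅x, y⁆ ∈ M :=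
  hg.commutator_le (commutator_mem_commutator (mem_top x) (mem_top y))

theorem isFinitelyPresented [Fintype ι] (hg : SpanningFamily q M r g)
    (h : ScalarConjugation q M v) (hr : 2 * r ≤ Fintype.card ι + 1) (hone : ∃ i, g i = 1) :
    Group.IsFinitelyPresented Γ := by
  have := h.normal
  have := h.isMulCommutative
  have E : ExchangeSystem r (fun _ ↦ 1) id g (M : Set Γ) :=
    h.exchangeSystem hr (fun _ ↦ one_pos) (fun _ ↦ rfl) hone
      (fun i j ↦ hg.commutator_mem (g i) (g j)) fun i ↦
      ⟨[(q (g i) : R)], rfl, (List.prod_singleton).symm, fun S hS y hy ↦ by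
        rw [List.mem_singleton.1 hy]
        exact hg.mem_closure S hS i⟩
  exact E.isFinitelyPresented Set.finite_empty (Set.empty_subset _)
    (by rw [Set.union_empty, hg.closure_eq_top])

section Kernel

/-- Generators of the kernel of a character that vanishes on all `g i` with `i ≠ a, b` and takes
opposite values on `g a` and `g b`; the letter `none` stands for `g a * g b`. -/
def kernelLetter (g : ι → Γ) (a b : ι) : Option {i // i ≠ a ∧ i ≠ b} → Γ
  | none => g a * g b
  | some i => g i

/-- The subgroup generated by the kernel letters and the commutators of the generators. -/
def kernelSubgroup (g : ι → Γ) (a b : ι) : Subgroup Γ :=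
  closure (Set.range (kernelLetter g a b) ∪ Set.range fun p : ι × ι ↦ ⁅g p.1, g p.2⁆)

variable {a b : ι}

lemma mem_kernelSubgroup {i : ι} (ha : i ≠ a) (hb : i ≠ b) : g i ∈ kernelSubgroup g a b :=
  subset_closure (.inl ⟨some ⟨i, ha, hb⟩, rfl⟩)

variable (g a b) in
lemma mul_mem_kernelSubgroup : g a * g b ∈ kernelSubgroup g a b :=
  subset_closure (.inl ⟨none, rfl⟩)

variable (g a b) in
lemma commutator_mem_kernelSubgroup (i j : ι) : ⁅g i, g j⁆ ∈ kernelSubgroup g a b :=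
  subset_closure (.inr ⟨(i, j), rfl⟩)

lemma conj_mem_kernelSubgroup_of_forall {x : Γ}
    (hletter : ∀ i, i ≠ a → i ≠ b → x * g i * x⁻¹ ∈ kernelSubgroup g a b)
    (hmul : x * (g a * g b) * x⁻¹ ∈ kernelSubgroup g a b)
    (hcomm : ∀ i j, x * ⁅g i, g j⁆ * x⁻¹ ∈ kernelSubgroup g a b) {y : Γ}
    (hy : y ∈ kernelSubgroup g a b) : x * y * x⁻¹ ∈ kernelSubgroup g a b := by
  refine (closure_le ((kernelSubgroup g a b).comap (MulAut.conj x).toMonoidHom)).2 ?_ hy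
  rintro _ (⟨_ | i, rfl⟩ | ⟨⟨i, j⟩, rfl⟩)
  exacts [hmul, hletter i i.2.1 i.2.2, hcomm i j]

lemma mem_closure_subtype (hg : SpanningFamily q M r g) {P : ι → Prop} {S : Finset {i // P i}}
    (hS : S.card = r) (i : ι) :
    (q (g i) : R) ∈ AddSubgroup.closure ((fun j : {i // P i} ↦ (q (g j) : R)) '' S) := by
  have := hg.mem_closure (S.map (.subtype P)) (by rw [Finset.card_map, hS]) i
  rwa [Finset.coe_map, Set.image_image] at this

lemma mem_of_kernelSubgroup_le {H : Subgroup Γ} (hH : kernelSubgroup g a b ≤ H) (ha : g a ∈ H)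
    (i : ι) : g i ∈ H := by
  by_cases hia : i = a
  · rwa [hia]
  by_cases hib : i = b
  · rw [hib, ← inv_mul_cancel_left (g a) (g b)]
    exact mul_mem (inv_mem ha) (hH (mul_mem_kernelSubgroup g a b))
  · exact hH (mem_kernelSubgroup hia hib)

variable {Q : Type*} [CommGroup Q] {φ : Γ →* Q}

lemma kernelSubgroup_le_ker (hφ : ∀ i, i ≠ a → i ≠ b → φ (g i) = 1) (hφab : φ (g a * g b) = 1) :
    kernelSubgroup g a b ≤ φ.ker := by
  refine (closure_le _).2 ?_
  rintro _ (⟨_ | i, rfl⟩ | ⟨⟨i, j⟩, rfl⟩)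
  exacts [hφab, hφ i i.2.1 i.2.2, Abelianization.commutator_subset_ker φ
    (commutator_mem_commutator (mem_top _) (mem_top _))]

variable [Fintype {i // i ≠ a ∧ i ≠ b}]

lemma exists_subset_kernelSubgroup (hg : SpanningFamily q M r g)
    (hr : 2 * r ≤ Fintype.card {i // i ≠ a ∧ i ≠ b} + 1) :
    ∃ Y ⊆ (kernelSubgroup g a b : Set Γ),
      ∀ i, (q (g i) : R) ∈ AddSubgroup.closure ((fun y ↦ (q y : R)) '' Y) := by
  obtain ⟨S, -, hS⟩ := Finset.exists_subset_card_eq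
    (show r ≤ (Finset.univ : Finset {i // i ≠ a ∧ i ≠ b}).card by rw [Finset.card_univ]; lia)
  refine ⟨(fun i : {i // i ≠ a ∧ i ≠ b} ↦ g i) '' S, ?_, fun i ↦ ?_⟩
  · rintro _ ⟨i, -, rfl⟩
    exact mem_kernelSubgroup i.2.1 i.2.2
  · rw [Set.image_image]
    exact hg.mem_closure_subtype hS i

lemma conj_left_mem_kernelSubgroup (hg : SpanningFamily q M r g) (h : ScalarConjugation q M v)
    (hr : 2 * r ≤ Fintype.card {i // i ≠ a ∧ i ≠ b} + 1) {y : Γ} (hy : y ∈ kernelSubgroup g a b) :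
    g a * y * (g a)⁻¹ ∈ kernelSubgroup g a b := by
  obtain ⟨Y, hY, hqY⟩ := hg.exists_subset_kernelSubgroup hr
  have hcomm (i j) : g a * ⁅g i, g j⁆ * (g a)⁻¹ ∈ kernelSubgroup g a b :=
    h.conj_mem_of_mem_addSubgroup_closure (hg.commutator_mem (g i) (g j))
      (commutator_mem_kernelSubgroup g a b i j) hY (hqY a)
  refine conj_mem_kernelSubgroup_of_forall (fun i hia hib ↦ ?_) ?_ hcomm hy
  · convert mul_mem (commutator_mem_kernelSubgroup g a b a i) (mem_kernelSubgroup hia hib) using 1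
    simp [commutatorElement_def]
  · convert mul_mem (hcomm a b) (mul_mem_kernelSubgroup g a b) using 1
    simp [commutatorElement_def, mul_assoc]

lemma conj_left_inv_mem_kernelSubgroup (hg : SpanningFamily q M r g)
    (h : ScalarConjugation q M v) (hr : 2 * r ≤ Fintype.card {i // i ≠ a ∧ i ≠ b} + 1) {y : Γ}
    (hy : y ∈ kernelSubgroup g a b) : (g a)⁻¹ * y * (g a)⁻¹⁻¹ ∈ kernelSubgroup g a b := by
  obtain ⟨Y, hY, hqY⟩ := hg.exists_subset_kernelSubgroup hr
  have hYmul : (· * (g a * g b)⁻¹) '' Y ⊆ (kernelSubgroup g a b : Set Γ) := by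
    rintro _ ⟨y, hy, rfl⟩
    exact mul_mem (hY hy) (inv_mem (mul_mem_kernelSubgroup g a b))
  have hqinv : (q (g a)⁻¹ : R) ∈ AddSubgroup.closure
      ((fun y ↦ (q y : R)) '' ((· * (g a * g b)⁻¹) '' Y)) := by
    simpa [mul_inv_rev] using
      ScalarConjugation.mul_mem_addSubgroup_closure (g a * g b)⁻¹ (hqY b)
  have hcomm (i j) : (g a)⁻¹ * ⁅g i, g j⁆ * (g a)⁻¹⁻¹ ∈ kernelSubgroup g a b :=
    h.conj_mem_of_mem_addSubgroup_closure (hg.commutator_mem (g i) (g j))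
      (commutator_mem_kernelSubgroup g a b i j) hYmul hqinv
  refine conj_mem_kernelSubgroup_of_forall (fun i hia hib ↦ ?_) ?_ hcomm hy
  · convert mul_mem (hcomm i a) (mem_kernelSubgroup hia hib) using 1
    simp [commutatorElement_def, mul_assoc]
  · convert mul_mem (commutator_mem_kernelSubgroup g a b b a) (mul_mem_kernelSubgroup g a b) using 1
    simp [commutatorElement_def, mul_assoc]

lemma kernelSubgroup_normal (hg : SpanningFamily q M r g) (h : ScalarConjugation q M v)
    (hr : 2 * r ≤ Fintype.card {i // i ≠ a ∧ i ≠ b} + 1) : (kernelSubgroup g a b).Normal := by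
  have ha : g a ∈ normalizer (kernelSubgroup g a b : Set Γ) := by
    refine mem_normalizer_iff.2 fun y ↦ ⟨hg.conj_left_mem_kernelSubgroup h hr, fun hy ↦ ?_⟩
    simpa [mul_assoc] using hg.conj_left_inv_mem_kernelSubgroup h hr hy
  rw [← normalizer_eq_top_iff, eq_top_iff, ← hg.closure_eq_top, closure_le]
  rintro _ ⟨i, rfl⟩
  exact mem_of_kernelSubgroup_le le_normalizer ha i

lemma kernelSubgroup_eq_ker (hg : SpanningFamily q M r g) (h : ScalarConjugation q M v)
    (hr : 2 * r ≤ Fintype.card {i // i ≠ a ∧ i ≠ b} + 1) (hφ : ∀ i, i ≠ a → i ≠ b → φ (g i) = 1)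
    (hφab : φ (g a * g b) = 1) (hφa : orderOf (φ (g a)) = 0) : kernelSubgroup g a b = φ.ker := by
  have := hg.kernelSubgroup_normal h hr
  have hle := kernelSubgroup_le_ker hφ hφab
  refine hle.antisymm fun y hy ↦ ?_
  have hsup : kernelSubgroup g a b ⊔ zpowers (g a) = ⊤ := by
    rw [eq_top_iff, ← hg.closure_eq_top, closure_le]
    rintro _ ⟨i, rfl⟩
    exact mem_of_kernelSubgroup_le le_sup_left (mem_sup_right (mem_zpowers (g a))) i
  obtain ⟨d, hd, _, ⟨n, rfl⟩, rfl⟩ := mem_sup_of_normal_left.1 (hsup ▸ mem_top y)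
  have hφn : φ (g a) ^ n = 1 := by
    simpa [MonoidHom.mem_ker.1 (hle hd)] using MonoidHom.mem_ker.1 hy
  have hn : n = 0 := injective_zpow_iff_not_isOfFinOrder.2 (orderOf_eq_zero_iff.1 hφa)
    (hφn.trans (zpow_zero _).symm)
  simpa [hn] using hd

theorem isFinitelyPresented_ker [Finite ι] (hg : SpanningFamily q M r g)
    (h : ScalarConjugation q M v) (hr : 2 * r ≤ Fintype.card {i // i ≠ a ∧ i ≠ b} + 1)
    (hone : ∃ i, i ≠ a ∧ i ≠ b ∧ g i = 1) (hφ : ∀ i, i ≠ a → i ≠ b → φ (g i) = 1)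
    (hφab : φ (g a * g b) = 1) (hφa : orderOf (φ (g a)) = 0) :
    Group.IsFinitelyPresented φ.ker := by
  have hker := hg.kernelSubgroup_eq_ker h hr hφ hφab hφa
  have hK := h.comap φ.ker.subtype_injective
  have := hK.normal
  have := hK.isMulCommutative
  let x (s : Option {i // i ≠ a ∧ i ≠ b}) : φ.ker :=
    ⟨kernelLetter g a b s, hker ▸ subset_closure (.inl ⟨s, rfl⟩)⟩
  let T : Set φ.ker := Set.range fun p : ι × ι ↦
    ⟨⁅g p.1, g p.2⁆, hker ▸ commutator_mem_kernelSubgroup g a b p.1 p.2⟩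
  have hone' : ∃ i, x (some i) = 1 := by
    obtain ⟨i, hia, hib, hi⟩ := hone
    exact ⟨⟨i, hia, hib⟩, Subtype.ext hi⟩
  have E : ExchangeSystem r (fun s ↦ s.elim 2 fun _ ↦ 1) some x
      (M.comap φ.ker.subtype : Set φ.ker) := by
    refine hK.exchangeSystem hr (by rintro (_ | _) <;> simp) (fun _ ↦ rfl) hone'
      (fun s s' ↦ hg.commutator_mem (x s : Γ) (x s')) ?_
    rintro (_ | i)
    · exact ⟨[(q (g a) : R), (q (g b) : R)], rfl, by simp [x, kernelLetter], fun S hS ↦ by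
        simpa using ⟨hg.mem_closure_subtype hS a, hg.mem_closure_subtype hS b⟩⟩
    · exact ⟨[(q (g i) : R)], rfl, by simp [x, kernelLetter], fun S hS ↦
        List.forall_mem_singleton.2 (hg.mem_closure_subtype hS i)⟩
  have hT : T ⊆ (M.comap φ.ker.subtype : Set φ.ker) :=
    Set.range_subset_iff.2 fun p ↦ hg.commutator_mem (g p.1) (g p.2)
  refine E.isFinitelyPresented (Set.finite_range _) hT ?_
  apply map_injective φ.ker.subtype_injective
  rw [MonoidHom.map_closure, ← MonoidHom.range_eq_map, range_subtype, Set.image_union,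
    ← Set.range_comp, ← Set.range_comp]
  exact hker

end Kernel

end SpanningFamily

end ScalarConjugation

/-! ### Affine groups -/

section AffineGroup

open Subgroup
open scoped commutatorElement

variable {Q R V ι : Type*} [CommGroup Q] [CommRing R] [AddCommGroup V] [Module R V]

/-- The semidirect product `V ⋊ Q` in which `Q` acts on the `R`-module `V` through scalars given by
`χ : Q →* Rˣ`. -/
abbrev AffineGroup (χ : Q →* Rˣ) (V : Type*) [AddCommGroup V] [Module R V] : Type _ :=
  Multiplicative V ⋊[(MulAutMultiplicative V).symm.toMonoidHom.comp
    ((DistribMulAction.toAddAut Rˣ V).comp χ)] Q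

namespace AffineGroup

variable {χ : Q →* Rˣ}

/-- The scalar by which an element of `V ⋊ Q` acts on `V` by conjugation. -/
def multiplier : AffineGroup χ V →* Rˣ := χ.comp SemidirectProduct.rightHom

/-- The component of an element of `V ⋊ Q` in `V`. -/
def translation (g : AffineGroup χ V) : V := g.left.toAdd

lemma translation_mul (g h : AffineGroup χ V) :
    translation (g * h) = translation g + (multiplier g : R) • translation h := rfl

lemma multiplier_eq_one {g : AffineGroup χ V} (hg : g.right = 1) : multiplier g = 1 :=
  (congrArg χ hg).trans χ.map_one

lemma ext_translation {g h : AffineGroup χ V} (hright : g.right = h.right)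
    (htranslation : translation g = translation h) : g = h :=
  SemidirectProduct.ext htranslation hright

variable (χ V) in
lemma scalarConjugation :
    ScalarConjugation (multiplier (χ := χ)) (SemidirectProduct.rightHom.ker)
      (translation (V := V)) where
  conj_mem g c hc := Normal.conj_mem inferInstance c hc g
  injOn c hc d hd h := ext_translation (Eq.trans hc (Eq.symm hd)) h
  map_mul c hc d _ := by rw [translation_mul, multiplier_eq_one hc, Units.val_one, one_smul]
  map_conj g c hc := by
    have h : translation (g * c * g⁻¹ * g) = translation (g * c) := by rw [inv_mul_cancel_right]
    have hright : (g * c * g⁻¹).right = 1 :=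
      Normal.conj_mem (inferInstance : SemidirectProduct.rightHom.ker.Normal) c hc g
    rw [translation_mul, translation_mul, multiplier_eq_one hright, Units.val_one, one_smul,
      add_comm] at h
    exact add_left_cancel h

lemma translation_commutator (g h : AffineGroup χ V) : translation ⁅g, h⁆ =
    ((multiplier g : R) - 1) • translation h - ((multiplier h : R) - 1) • translation g := by
  have hright : ⁅g, h⁆.right = 1 := map_commutatorElement SemidirectProduct.rightHom g h |>.trans
    (commutatorElement_eq_one_iff_mul_comm.2 (mul_comm _ _))
  have hmul : translation (⁅g, h⁆ * (h * g)) = translation (g * h) := by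
    rw [commutatorElement_def]; group
  rw [translation_mul, multiplier_eq_one hright, Units.val_one, one_smul, translation_mul,
    translation_mul] at hmul
  rw [eq_sub_of_add_eq hmul]
  module

end AffineGroup

/-- The character `κ ↦ ∏ l i ^ κ i` of `ℤ^ι`. -/
def monomialCharacter {A : Type*} [CommGroup A] [Fintype ι] (l : ι → A) :
    Multiplicative (ι → ℤ) →* A where
  toFun κ := ∏ i, l i ^ κ.toAdd i
  map_one' := by simp
  map_mul' κ κ' := by simp [zpow_add, Finset.prod_mul_distrib]

lemma monomialCharacter_apply {A : Type*} [CommGroup A] [Fintype ι] (l : ι → A)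
    (κ : Multiplicative (ι → ℤ)) : monomialCharacter l κ = ∏ i, l i ^ κ.toAdd i := rfl

lemma monomialCharacter_single_sub_single {A : Type*} [CommGroup A] [Fintype ι] [DecidableEq ι]
    (l : ι → A) (i j : ι) :
    monomialCharacter l (.ofAdd (Pi.single i 1 - Pi.single j 1)) = l i * (l j)⁻¹ := by
  have hsingle (i : ι) : monomialCharacter l (.ofAdd (Pi.single i 1)) = l i := by
    simp [monomialCharacter_apply, Pi.single_apply]
  rw [ofAdd_sub, map_div, hsingle, hsingle, div_eq_mul_inv]

end AffineGroup

/-! ### Excluding Baumslag–Solitar subgroups -/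

section BaumslagSolitar

/-- The homomorphism `κ` maps any two commuting elements to multiplicatively dependent ones. -/
def CommutingPairsDependent {Γ Q : Type*} [Group Γ] [Group Q] (κ : Γ →* Q) : Prop :=
  ∀ g h : Γ, Commute g h → ∃ a b : ℤ, (a ≠ 0 ∨ b ≠ 0) ∧ κ (g ^ a * h ^ b) = 1

/-- The generator `x` of `BS(m, n)`. -/
def bsX (m n : ℤ) : BS m n := PresentedGroup.of 0

/-- The generator `y` of `BS(m, n)`, which conjugates `x ^ m` to `x ^ n`. -/
def bsY (m n : ℤ) : BS m n := PresentedGroup.of 1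

lemma bsX_zpow_mul_bsY (m n : ℤ) : bsX m n ^ m * bsY m n = bsY m n * bsX m n ^ n := by
  have h : (bsY m n)⁻¹ * bsX m n ^ m * bsY m n * bsX m n ^ (-n) = 1 := by
    simpa [PresentedGroup.of, bsX, bsY] using
      PresentedGroup.one_of_mem (rels := BSRels m n) (Set.mem_singleton _)
  rwa [zpow_neg, mul_inv_eq_one, mul_assoc, inv_mul_eq_iff_eq_mul] at h

lemma exists_bs_hom {H : Type*} [Group H] {m n : ℤ} {x y : H} (h : x ^ m * y = y * x ^ n) :
    ∃ f : BS m n →* H, f (bsX m n) = x ∧ f (bsY m n) = y := by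
  have hrel : ∀ r ∈ BSRels m n, FreeGroup.lift ![x, y] r = 1 := by
    rintro _ rfl
    simp [mul_assoc, ← mul_assoc (x ^ m), h]
  exact ⟨PresentedGroup.toGroup hrel, PresentedGroup.toGroup.of hrel,
    PresentedGroup.toGroup.of hrel⟩

-- `BS(m, n)` acts on `ℚ` by `x : r ↦ r + 1` and `y : r ↦ r m / n`.
lemma not_isOfFinOrder_bsX {m n : ℤ} (hm : m ≠ 0) (hn : n ≠ 0) : ¬ IsOfFinOrder (bsX m n) := by
  have hmn : (m / n : ℚ) ≠ 0 := div_ne_zero (Int.cast_ne_zero.2 hm) (Int.cast_ne_zero.2 hn)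
  have hrel : Equiv.addRight (1 : ℚ) ^ m * Equiv.mulRight₀ (m / n : ℚ) hmn =
      Equiv.mulRight₀ (m / n : ℚ) hmn * Equiv.addRight (1 : ℚ) ^ n := by
    ext r
    have hn' : (n : ℚ) ≠ 0 := Int.cast_ne_zero.2 hn
    simp [add_mul, mul_div_cancel₀ _ hn']
  obtain ⟨f, hfx, -⟩ := exists_bs_hom hrel
  intro hfin
  obtain ⟨d, hd, hpow⟩ := isOfFinOrder_iff_pow_eq_one.1 hfin
  have hd0 := congrArg (fun σ ↦ f σ 0) hpow
  simp [hfx, hd.ne'] at hd0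

variable {Γ Q : Type} [Group Γ] [CommGroup Q] {κ : Γ →* Q} {p : ℕ} [NeZero p]

-- `x` and `y` generate a free abelian group of rank two, because their images under `f` do.
lemma not_commutingPairsDependent_of_injective (hκ : ∀ g ∈ κ.ker, g ^ p = 1) {B : Type*}
    [Group B] {j : B →* Γ} (hj : Function.Injective j)
    {f : B →* Multiplicative (ℤ × ℤ)} {x y : B} {m : ℤ} (hm : m ≠ 0)
    (hx : (f x).toAdd = (m, 0)) (hy : (f y).toAdd = (0, 1)) (hxy : Commute x y) :
    ¬ CommutingPairsDependent κ := by
  intro hdep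
  obtain ⟨a, b, hab, hker⟩ := hdep (j x) (j y) (hxy.map j)
  have hpow : (x ^ a * y ^ b) ^ p = 1 := hj (by simpa using hκ _ hker)
  have hab0 : a = 0 ∧ b = 0 := by
    simpa [hx, hy, Prod.ext_iff, hm, NeZero.ne p] using congrArg (fun z ↦ (f z).toAdd) hpow
  tauto

lemma CommutingPairsDependent.not_nonempty_mulEquiv_int_prod_int
    (hdep : CommutingPairsDependent κ) (hκ : ∀ g ∈ κ.ker, g ^ p = 1) (K : Subgroup Γ) :
    ¬ Nonempty (K ≃* Multiplicative (ℤ × ℤ)) := by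
  rintro ⟨e⟩
  exact not_commutingPairsDependent_of_injective hκ (f := MonoidHom.id _)
    (j := K.subtype.comp e.symm.toMonoidHom) (x := .ofAdd (1, 0)) (y := .ofAdd (0, 1))
    (K.subtype_injective.comp e.symm.injective) one_ne_zero rfl rfl (.all _ _) hdep

lemma CommutingPairsDependent.hasNoBSSubgroup [IsMulTorsionFree Q]
    (hdep : CommutingPairsDependent κ) (hκ : ∀ g ∈ κ.ker, g ^ p = 1) : HasNoBSSubgroup Γ := by
  rintro m n hm hn K ⟨e⟩
  let j : BS m n →* Γ := K.subtype.comp e.symm.toMonoidHom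
  have hj : Function.Injective j := K.subtype_injective.comp e.symm.injective
  rcases eq_or_ne m n with rfl | hmn
  · obtain ⟨f, hfx, hfy⟩ := exists_bs_hom (m := m) (n := m)
      (x := Multiplicative.ofAdd ((1 : ℤ), (0 : ℤ))) (y := .ofAdd (0, 1)) (mul_comm _ _)
    refine not_commutingPairsDependent_of_injective hκ hj (f := f) (x := bsX m m ^ m)
      (y := bsY m m) hm ?_ ?_ (bsX_zpow_mul_bsY m m) hdep
    · simp [hfx]
    · simp [hfy]
  · have hpow : κ (j (bsX m n)) ^ m = κ (j (bsX m n)) ^ n := by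
      have hrel := congrArg (κ ∘ j) (bsX_zpow_mul_bsY m n)
      simpa [mul_comm (κ (j (bsY m n)))] using hrel
    have hker : κ (j (bsX m n)) = 1 := by
      have hsub : κ (j (bsX m n)) ^ (m - n) = 1 := by rw [zpow_sub, hpow, mul_inv_cancel]
      exact (IsMulTorsionFree.zpow_eq_one_iff_left (sub_ne_zero.2 hmn)).1 hsub
    refine not_isOfFinOrder_bsX hm hn (isOfFinOrder_iff_pow_eq_one.2 ⟨p, NeZero.pos p, hj ?_⟩)
    rw [map_pow, map_one, hκ _ hker]

end BaumslagSolitar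

/-! ### The moment ring -/

section MomentRing

open MvPolynomial

lemma exists_prime_dvd_of_irreducible_dvd_algebraMap {A B : Type*} [CommRing A] [IsDomain A]
    [UniqueFactorizationMonoid A] (S : Submonoid A) [CommRing B] [Algebra A B] [IsLocalization S B]
    {d : B} (hd : Irreducible d) :
    ∃ f : A, Prime f ∧ ¬ IsUnit (algebraMap A B f) ∧ ∀ a, d ∣ algebraMap A B a → f ∣ a := by
  let loc := IsLocalization.toLocalizationMap S B
  obtain ⟨⟨m, s⟩, hms⟩ := IsLocalization.surj S d
  have hs : IsUnit (algebraMap A B s) := IsLocalization.map_units B s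
  have hm : Irreducible (algebraMap A B m) := hms ▸ (irreducible_mul_isUnit hs).2 hd
  obtain ⟨u, f, hu, hf, rfl⟩ := loc.eq_isUnit_map_mul_irreducible_of_irreducible_map hm
  have hfd : Irreducible (algebraMap A B f) :=
    (irreducible_isUnit_mul hu).1 (map_mul (algebraMap A B) u f ▸ hm)
  have hdvd : algebraMap A B f ∣ d := by
    refine (hs.dvd_mul_right).1 (hms ▸ ?_)
    exact map_dvd _ (Dvd.intro_left u rfl)
  refine ⟨f, hf.prime, hfd.not_isUnit, fun a ha ↦ ?_⟩
  obtain ⟨c, hc, hca⟩ := loc.map_dvd_map.1 (hdvd.trans ha)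
  refine (hf.prime.dvd_or_dvd hca).resolve_left fun hfc ↦ hfd.not_isUnit ?_
  exact isUnit_of_dvd_unit (map_dvd _ hfc) (IsLocalization.map_units B ⟨c, hc⟩)

lemma X_mem_span_momentForm {k ι : Type*} [Field k] {n : ℕ} {t : ι → k} {S : Finset ι}
    (ht : Set.InjOn t S) (hS : S.card = n) (m : Fin n) :
    X m ∈ Submodule.span k ((fun i ↦ momentForm n (t i)) '' S) := by
  classical
  -- Expanding `T ^ j` in the Lagrange basis inverts the Vandermonde matrix of the nodes.
  have hcoeff (j : Fin n) :
      ∑ i ∈ S, (Lagrange.basis S t i).coeff m * t i ^ (j : ℕ) = if j = m then 1 else 0 := by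
    have h := Lagrange.eq_interpolate (f := (Polynomial.X : Polynomial k) ^ (j : ℕ)) ht
      (by rw [Polynomial.degree_X_pow, hS]; exact_mod_cast j.2)
    simpa [Lagrange.interpolate_apply, Polynomial.coeff_X_pow, Fin.val_inj, mul_comm, eq_comm,
      ← Polynomial.C_pow, Polynomial.coeff_mul_C, -map_pow]
      using congrArg (Polynomial.coeff · (m : ℕ)) h
  have hX : X m = ∑ i ∈ S, (Lagrange.basis S t i).coeff m • momentForm n (t i) := by
    simp only [momentForm, smul_eq_C_mul, Finset.mul_sum, ← mul_assoc, ← C_mul]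
    rw [Finset.sum_comm]
    simp only [← Finset.sum_mul, ← map_sum, hcoeff]
    simp
  rw [hX]
  exact Submodule.sum_mem _ fun i hi ↦
    Submodule.smul_mem _ _ (Submodule.subset_span (Set.mem_image_of_mem _ hi))

lemma momentForm_mem_span_range_X {k : Type*} [Field k] (n : ℕ) (s : k) :
    momentForm n s ∈ Submodule.span k (Set.range X) :=
  Submodule.sum_mem _ fun j _ ↦ by
    rw [← smul_eq_C_mul]
    exact Submodule.smul_mem _ _ (Submodule.subset_span ⟨j, rfl⟩)

variable {k ι : Type*} [Field k] [Fintype ι] (n : ℕ) (t : ι → k)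

/-- The ring of polynomials in `X₀, …, Xₙ` with the linear forms `momentForm (n + 1) (t i)`
inverted. -/
def MomentRing : Type _ :=
  Localization.Away (∏ i, momentForm (n + 1) (t i))

namespace MomentRing

noncomputable instance : CommRing (MomentRing n t) :=
  inferInstanceAs (CommRing (Localization.Away (∏ i, momentForm (n + 1) (t i))))

noncomputable instance : Algebra (MvPolynomial (Fin (n + 1)) k) (MomentRing n t) :=
  inferInstanceAs (Algebra _ (Localization.Away (∏ i, momentForm (n + 1) (t i))))

instance : IsLocalization.Away (∏ i, momentForm (n + 1) (t i)) (MomentRing n t) :=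
  inferInstanceAs (IsLocalization.Away _ (Localization.Away (∏ i, momentForm (n + 1) (t i))))

lemma powers_le_nonZeroDivisors :
    Submonoid.powers (∏ i, momentForm (n + 1) (t i)) ≤
      nonZeroDivisors (MvPolynomial (Fin (n + 1)) k) :=
  powers_le_nonZeroDivisors_of_noZeroDivisors
    (Finset.prod_ne_zero_iff.2 fun i _ ↦ momentForm_ne_zero n (t i))

instance : IsDomain (MomentRing n t) :=
  IsLocalization.isDomain_of_le_nonZeroDivisors _ (powers_le_nonZeroDivisors n t)

instance : UniqueFactorizationMonoid (MomentRing n t) :=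
  UniqueFactorizationMonoid.of_isLocalization
    (Submonoid.powers (∏ i, momentForm (n + 1) (t i))) _

lemma algebraMap_injective :
    Function.Injective (algebraMap (MvPolynomial (Fin (n + 1)) k) (MomentRing n t)) :=
  IsLocalization.injective _ (powers_le_nonZeroDivisors n t)

instance (p : ℕ) [CharP k p] : CharP (MomentRing n t) p :=
  charP_of_injective_ringHom (algebraMap_injective n t) p

lemma isUnit_algebraMap_momentForm (i : ι) :
    IsUnit (algebraMap _ (MomentRing n t) (momentForm (n + 1) (t i))) :=
  isUnit_of_dvd_unit (map_dvd _ <|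
      Finset.dvd_prod_of_mem (fun j ↦ momentForm (n + 1) (t j)) (Finset.mem_univ i))
    (IsLocalization.Away.algebraMap_isUnit (∏ i, momentForm (n + 1) (t i)))

/-- The linear form `momentForm (n + 1) (t i)` as a unit of the moment ring. -/
noncomputable def unit (i : ι) : (MomentRing n t)ˣ := (isUnit_algebraMap_momentForm n t i).unit

lemma coe_unit (i : ι) :
    (unit n t i : MomentRing n t) = algebraMap _ _ (momentForm (n + 1) (t i)) := rfl

/-- The variable `Xₘ` as an element of the moment ring. -/
noncomputable def coord (m : Fin (n + 1)) : MomentRing n t :=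
  algebraMap (MvPolynomial (Fin (n + 1)) k) _ (X m)

/-- The additive map `f ↦ f / Lⱼ` from polynomials to the moment ring, where `Lⱼ` is the form
`momentForm (n + 1) (t j)`. -/
noncomputable def divUnit (j : ι) : MvPolynomial (Fin (n + 1)) k →+ MomentRing n t :=
  (AddMonoidHom.mulRight ↑(unit n t j)⁻¹).comp (algebraMap _ _).toAddMonoidHom

variable {n t}

/-- The extension to the moment ring of a ring homomorphism to a field that does not vanish on the
linear forms. -/
noncomputable def lift {E : Type*} [Field E] {θ : MvPolynomial (Fin (n + 1)) k →+* E}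
    (hθ : ∀ i, θ (momentForm (n + 1) (t i)) ≠ 0) : MomentRing n t →+* E :=
  IsLocalization.Away.lift (∏ i, momentForm (n + 1) (t i)) (g := θ) <| by
    rw [isUnit_iff_ne_zero, map_prod, Finset.prod_ne_zero_iff]
    exact fun i _ ↦ hθ i

@[simp] lemma lift_algebraMap {E : Type*} [Field E] {θ : MvPolynomial (Fin (n + 1)) k →+* E}
    (hθ : ∀ i, θ (momentForm (n + 1) (t i)) ≠ 0) (f : MvPolynomial (Fin (n + 1)) k) :
    lift hθ (algebraMap _ _ f) = θ f :=
  IsLocalization.Away.lift_eq _ _ f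

@[simp] lemma lift_coord {E : Type*} [Field E] {θ : MvPolynomial (Fin (n + 1)) k →+* E}
    (hθ : ∀ i, θ (momentForm (n + 1) (t i)) ≠ 0) (m : Fin (n + 1)) :
    lift hθ (coord n t m) = θ (X m) :=
  lift_algebraMap hθ (X m)

lemma associated_monomialCharacter_unit_sub_one (μ : Multiplicative (ι → ℤ)) :
    Associated ((monomialCharacter (unit n t) μ : MomentRing n t) - 1)
      (algebraMap _ _ (powBinomial (momentForm (n + 1) ∘ t) μ.toAdd)) :=
  ⟨posProd (unit n t) (-μ.toAdd), by
    rw [monomialCharacter_apply, ← powBinomial_units]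
    simp [powBinomial, map_posProd, Function.comp_def, coe_unit]⟩

lemma monomialCharacter_unit_sub_one_ne_zero {t : ι → k} (ht : Function.Injective t)
    {μ : Multiplicative (ι → ℤ)} (hμ : μ ≠ 1) :
    (monomialCharacter (unit (n + 1) t) μ : MomentRing (n + 1) t) - 1 ≠ 0 := by
  rw [(associated_monomialCharacter_unit_sub_one μ).ne_zero_iff]
  exact (map_ne_zero_iff _ (algebraMap_injective _ t)).2 (powBinomial_momentForm_ne_zero ht hμ)

lemma isRelPrime_monomialCharacter_unit_sub_one {t : ι → k} (ht : Function.Injective t)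
    {μ ν : Multiplicative (ι → ℤ)} (hμ : ∑ i, μ.toAdd i = 0)
    (hind : ∀ a b : ℤ, μ ^ a * ν ^ b = 1 → a = 0 ∧ b = 0) :
    IsRelPrime ((monomialCharacter (unit (n + 3) t) μ : MomentRing (n + 3) t) - 1)
      ((monomialCharacter (unit (n + 3) t) ν : MomentRing (n + 3) t) - 1) := by
  have hμ1 : μ ≠ 1 := fun h ↦ one_ne_zero (hind 1 0 (by simp [h])).1
  refine (UniqueFactorizationMonoid.isRelPrime_iff_no_prime_factors
    (monomialCharacter_unit_sub_one_ne_zero ht hμ1)).2 fun d hdμ hdν hd ↦ ?_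
  obtain ⟨f, hf, hfunit, hdvd⟩ := exists_prime_dvd_of_irreducible_dvd_algebraMap
    (Submonoid.powers (∏ i, momentForm (n + 4) (t i))) hd.irreducible
  have hft (i : ι) : ¬ f ∣ momentForm (n + 4) (t i) := fun h ↦
    hfunit (isUnit_of_dvd_unit (map_dvd _ h) (isUnit_algebraMap_momentForm _ t i))
  obtain ⟨a, b, hab, hrel⟩ := exists_int_relation_of_prime_dvd_powBinomial hf ht hft hμ
    (hdvd _ (hdμ.trans (associated_monomialCharacter_unit_sub_one μ).dvd))
    (hdvd _ (hdν.trans (associated_monomialCharacter_unit_sub_one ν).dvd))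
  have := hind a b hrel
  tauto

end MomentRing

end MomentRing

/-! ### The moment group -/

section MomentGroup

open AffineGroup
open MvPolynomial (C X eval)
open scoped commutatorElement

lemma IsCrossedHom.eqOn_closure {H E : Type*} [Group H] [CommRing E] {χ : H →* E} {u w : H → E}
    (hu : IsCrossedHom χ u) (hw : IsCrossedHom χ w) {S : Set H} (h : Set.EqOn u w S) :
    Set.EqOn u w (Subgroup.closure S) := by
  intro g hg
  induction hg using Subgroup.closure_induction with
  | mem g hg => exact h hg
  | one => rw [hu.map_one, hw.map_one]
  | mul g h _ _ ihg ihh => rw [hu, hw, ihg, ihh]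
  | inv g _ ih =>
    have hug := hu g⁻¹ g
    have hwg := hw g⁻¹ g
    rw [inv_mul_cancel, hu.map_one, ih] at hug
    rw [inv_mul_cancel, hw.map_one] at hwg
    exact add_right_cancel (hug.symm.trans hwg)

lemma isCrossedHom_sub_one {H E : Type*} [Group H] [CommRing E] (χ : H →* E) :
    IsCrossedHom χ fun g ↦ χ g - 1 :=
  fun g h ↦ by simp only [map_mul]; ring

variable {k ι : Type*} [Field k] [Fintype ι] [DecidableEq ι] (n : ℕ) (t : ι → k) (o : ι)

/-- The generator `(eᵢ - eₒ, wᵢ)` of the moment group, where `wᵢ` is the vector of coefficients of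
`X₁, …, Xₙ` in `Lᵢ / Lₒ - 1` for the linear forms `Lᵢ = momentForm (n + 1) (t i)`. -/
noncomputable def momentGenerator (i : ι) :
    AffineGroup (monomialCharacter (MomentRing.unit n t)) (Fin n → MomentRing n t) where
  left := .ofAdd fun j ↦
    algebraMap (MvPolynomial (Fin (n + 1)) k) _ (C (t i ^ (j + 1 : ℕ) - t o ^ (j + 1 : ℕ))) *
      ↑(MomentRing.unit n t o)⁻¹
  right := .ofAdd (Pi.single i 1 - Pi.single o 1)

/-- The group generated by the elements `momentGenerator n t o i`. -/
noncomputable def momentGroup : Subgroup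
    (AffineGroup (monomialCharacter (MomentRing.unit n t)) (Fin n → MomentRing n t)) :=
  Subgroup.closure (Set.range (momentGenerator n t o))

namespace momentGroup

/-- The generators of the moment group as elements of it. -/
noncomputable def gen (i : ι) : momentGroup n t o :=
  ⟨momentGenerator n t o i, Subgroup.subset_closure ⟨i, rfl⟩⟩

/-- The exponent vector of an element of the moment group. -/
noncomputable def exponent : momentGroup n t o →* Multiplicative (ι → ℤ) :=
  SemidirectProduct.rightHom.comp (momentGroup n t o).subtype

/-- The scalar by which an element of the moment group acts by conjugation on the kernel of
`exponent`. -/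
noncomputable def scalar : momentGroup n t o →* (MomentRing n t)ˣ :=
  multiplier.comp (momentGroup n t o).subtype

/-- The translation part of an element of the moment group. -/
noncomputable def shift (g : momentGroup n t o) : Fin n → MomentRing n t := translation g.1

lemma scalarConjugation : ScalarConjugation (scalar n t o) (exponent n t o).ker (shift n t o) :=
  (AffineGroup.scalarConjugation _ _).comap (momentGroup n t o).subtype_injective

variable {n t o}

lemma scalar_eq (g : momentGroup n t o) :
    scalar n t o g = monomialCharacter (MomentRing.unit n t) (exponent n t o g) := rfl

lemma shift_mul (g h : momentGroup n t o) :
    shift n t o (g * h) = shift n t o g + (scalar n t o g : MomentRing n t) • shift n t o h :=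
  translation_mul g.1 h.1

lemma shift_commutator (g h : momentGroup n t o) : shift n t o ⁅g, h⁆ =
    ((scalar n t o g : MomentRing n t) - 1) • shift n t o h -
      ((scalar n t o h : MomentRing n t) - 1) • shift n t o g :=
  translation_commutator g.1 h.1

lemma exponent_gen (i : ι) :
    exponent n t o (gen n t o i) = .ofAdd (Pi.single i 1 - Pi.single o 1) := rfl

lemma scalar_gen (i : ι) :
    scalar n t o (gen n t o i) = MomentRing.unit n t i * (MomentRing.unit n t o)⁻¹ :=
  monomialCharacter_single_sub_single _ i o

lemma gen_self : gen n t o o = 1 := by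
  refine Subtype.ext (ext_translation ?_ (funext fun j ↦ ?_))
  · simp [gen, momentGenerator]
  · simp [gen, momentGenerator, translation]

lemma closure_range_gen : Subgroup.closure (Set.range (gen n t o)) = ⊤ := by
  have hrange : Set.range (gen n t o) = ((↑) : momentGroup n t o → _) ⁻¹'
      Set.range (momentGenerator n t o) := by
    ext g
    simp [gen, Subtype.ext_iff]
  rw [hrange]
  exact Subgroup.closure_closure_coe_preimage

lemma monomialCharacter_const_exponent {A : Type*} [CommGroup A] (a : A) (g : momentGroup n t o) :
    monomialCharacter (fun _ ↦ a) (exponent n t o g) = 1 := by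
  have h : (monomialCharacter fun _ ↦ a).comp (exponent n t o) = 1 :=
    MonoidHom.eq_of_eqOn_dense closure_range_gen <| by
      rintro _ ⟨i, rfl⟩
      rw [MonoidHom.comp_apply, exponent_gen, monomialCharacter_single_sub_single,
        mul_inv_cancel, MonoidHom.one_apply]
  exact DFunLike.congr_fun h g

lemma sum_exponent (g : momentGroup n t o) : ∑ i, (exponent n t o g).toAdd i = 0 := by
  have h := monomialCharacter_const_exponent (Multiplicative.ofAdd (1 : ℤ)) g
  rw [monomialCharacter_apply] at h
  simpa [← ofAdd_zsmul, ← ofAdd_sum] using h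

lemma sum_shift_mul_X (g : momentGroup n t o) :
    ∑ j : Fin n, shift n t o g j * MomentRing.coord n t j.succ =
      (scalar n t o g : MomentRing n t) - 1 := by
  let χ : momentGroup n t o →* MomentRing n t := (Units.coeHom _).comp (scalar n t o)
  have hcrossed : IsCrossedHom χ
      fun g ↦ ∑ j : Fin n, shift n t o g j * MomentRing.coord n t j.succ := fun g h ↦ by
    simp [χ, shift_mul, add_mul, Finset.sum_add_distrib, Finset.mul_sum, mul_assoc]
  refine hcrossed.eqOn_closure (isCrossedHom_sub_one χ) (S := Set.range (gen n t o)) ?_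
    (closure_range_gen.ge (Subgroup.mem_top g))
  rintro _ ⟨i, rfl⟩
  have hform : momentForm (n + 1) (t i) - momentForm (n + 1) (t o) =
      ∑ j : Fin n, C (t i ^ (j + 1 : ℕ) - t o ^ (j + 1 : ℕ)) * X j.succ := by
    simp [momentForm, Fin.sum_univ_succ, Finset.sum_sub_distrib, sub_mul]
  have hscalar : χ (gen n t o i) - 1 = algebraMap _ _ (momentForm (n + 1) (t i) -
      momentForm (n + 1) (t o)) * ↑(MomentRing.unit n t o)⁻¹ := by
    rw [map_sub, sub_mul, ← MomentRing.coe_unit, ← MomentRing.coe_unit, Units.mul_inv]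
    exact congrArg (· - 1) (congrArg Units.val (scalar_gen i))
  dsimp only
  rw [hscalar, hform, map_sum, Finset.sum_mul]
  refine Finset.sum_congr rfl fun j _ ↦ ?_
  rw [map_mul, mul_right_comm]
  rfl

lemma pow_eq_one_of_mem_ker_exponent {p : ℕ} [CharP k p] {g : momentGroup n t o}
    (hg : g ∈ (exponent n t o).ker) : g ^ p = 1 :=
  (scalarConjugation n t o).pow_eq_one hg

-- If commuting `g`, `h` had independent exponents, `scalar g - 1` and `scalar h - 1` would be
-- coprime, so `scalar g - 1` would divide `shift g` and `1` would lie in the ideal `(X₁, …, Xₙ)`.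
lemma commutingPairsDependent {t : ι → k} (ht : Function.Injective t) :
    CommutingPairsDependent (exponent (n + 3) t o) := by
  intro g h hgh
  by_contra! hind
  have hq : IsRelPrime ((scalar (n + 3) t o g : MomentRing (n + 3) t) - 1)
      ((scalar (n + 3) t o h : MomentRing (n + 3) t) - 1) :=
    MomentRing.isRelPrime_monomialCharacter_unit_sub_one ht
      (μ := exponent (n + 3) t o g) (ν := exponent (n + 3) t o h) (sum_exponent g) fun a b hab ↦ by
      by_contra hne
      exact hind a b (not_and_or.1 hne) (by simpa using hab)
  have hq0 : (scalar (n + 3) t o g : MomentRing (n + 3) t) - 1 ≠ 0 :=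
    MomentRing.monomialCharacter_unit_sub_one_ne_zero ht (μ := exponent (n + 3) t o g) fun h1 ↦
      hind 1 0 (by simp) (by simpa using h1)
  have hdvd (j : Fin (n + 3)) :
      (scalar (n + 3) t o g : MomentRing (n + 3) t) - 1 ∣ shift (n + 3) t o g j := by
    have hcomm := congrArg (shift (n + 3) t o · j) hgh.eq
    simp only [shift_mul, Pi.add_apply, Pi.smul_apply, smul_eq_mul] at hcomm
    exact hq.dvd_of_dvd_mul_left ⟨shift (n + 3) t o h j, by linear_combination -hcomm⟩
  choose w hw using hdvd
  have hone : ∑ j, w j * MomentRing.coord (n + 3) t j.succ = 1 := by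
    refine mul_left_cancel₀ hq0 ?_
    simp_rw [mul_one, Finset.mul_sum, ← mul_assoc, ← hw, sum_shift_mul_X]
  have hform (i : ι) : eval (Pi.single 0 1) (momentForm (n + 4) (t i)) ≠ 0 := by
    simp [momentForm, Pi.single_apply]
  simpa using congrArg (MomentRing.lift hform) hone

end momentGroup

end MomentGroup

section FinitePresentation

open MvPolynomial (X)

lemma map_mem_addSubgroup_closure_of_mem_span {k M N : Type*} [Field k] [AddCommGroup M]
    [Module k M] [AddCommGroup N] (hk : Function.Surjective (algebraMap ℤ k)) (F : M →+ N)
    {s : Set M} {x : M} (hx : x ∈ Submodule.span k s) : F x ∈ AddSubgroup.closure (F '' s) := by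
  rw [← AddMonoidHom.map_closure, ← Submodule.span_int_eq_addSubgroupClosure,
    ← Submodule.restrictScalars_span ℤ k hk]
  exact ⟨x, hx, rfl⟩

namespace momentGroup

variable {k ι : Type*} [Field k] [Fintype ι] [DecidableEq ι] {n : ℕ} {t : ι → k} {o : ι}

lemma divUnit_momentForm (i j : ι) : MomentRing.divUnit n t j (momentForm (n + 1) (t i)) =
    scalar n t o (gen n t o i * (gen n t o j)⁻¹) := by
  rw [map_mul, map_inv, scalar_gen, scalar_gen, mul_inv_rev, inv_inv, mul_assoc,
    inv_mul_cancel_left]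
  rfl

lemma coord_mul_inv_unit_mem_closure (ht : Function.Injective t)
    (hk : Function.Surjective (algebraMap ℤ k)) (hn : n + 1 ≤ Fintype.card ι) (m : Fin (n + 1))
    (j : ι) : MomentRing.coord n t m * ↑(MomentRing.unit n t j)⁻¹ ∈
      Subring.closure (Set.range fun g ↦ (scalar n t o g : MomentRing n t)) := by
  obtain ⟨S, -, hS⟩ := Finset.exists_subset_card_eq (s := Finset.univ) hn
  have h := map_mem_addSubgroup_closure_of_mem_span hk (MomentRing.divUnit n t j)
    (X_mem_span_momentForm ht.injOn hS m)
  let B := Subring.closure (Set.range fun g ↦ (scalar n t o g : MomentRing n t))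
  refine (AddSubgroup.closure_le B.toAddSubgroup).2 ?_ h
  rintro _ ⟨_, ⟨i, -, rfl⟩, rfl⟩
  exact Subring.subset_closure ⟨_, (divUnit_momentForm i j).symm⟩

variable (o) in
lemma spanningFamily (ht : Function.Injective t) (hk : Function.Surjective (algebraMap ℤ k)) :
    SpanningFamily (scalar n t o) (exponent n t o).ker (n + 1) (gen n t o) where
  closure_eq_top := closure_range_gen
  commutator_le := Abelianization.commutator_subset_ker _
  mem_closure S hS i := by
    have hspan : momentForm (n + 1) (t i) ∈
        Submodule.span k ((fun i ↦ momentForm (n + 1) (t i)) '' S) := by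
      refine Submodule.span_le.2 ?_ (momentForm_mem_span_range_X (n + 1) (t i))
      rintro _ ⟨m, rfl⟩
      exact X_mem_span_momentForm ht.injOn hS m
    have h := map_mem_addSubgroup_closure_of_mem_span hk (MomentRing.divUnit n t o) hspan
    simpa only [Set.image_image, divUnit_momentForm (o := o), gen_self, inv_one, mul_one] using h

theorem isFinitelyPresented (ht : Function.Injective t)
    (hk : Function.Surjective (algebraMap ℤ k)) (hn : 2 * n + 1 ≤ Fintype.card ι) :
    Group.IsFinitelyPresented (momentGroup n t o) :=
  (spanningFamily o ht hk).isFinitelyPresented (scalarConjugation n t o) (by lia) ⟨o, gen_self⟩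

variable (n t o) in
/-- The character `κₐ - κ_b` of the moment group, where `κ` is the exponent vector. -/
noncomputable def exponentDiff (a b : ι) : momentGroup n t o →* Multiplicative ℤ :=
  (AddMonoidHom.toMultiplicative (Pi.evalAddMonoidHom (fun _ ↦ ℤ) a - Pi.evalAddMonoidHom _ b)).comp
    (exponent n t o)

lemma exponentDiff_gen (a b i : ι) : exponentDiff n t o a b (gen n t o i) = .ofAdd
    ((Pi.single i 1 - Pi.single o 1 : ι → ℤ) a - (Pi.single i 1 - Pi.single o 1 : ι → ℤ) b) :=
  rfl

lemma ker_exponent_le_ker_exponentDiff (a b : ι) :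
    (exponent n t o).ker ≤ (exponentDiff n t o a b).ker := by
  rw [exponentDiff, ← MonoidHom.comap_ker]
  exact fun g hg ↦ Subgroup.mem_comap.2 (MonoidHom.mem_ker.1 hg ▸ one_mem _)

variable {a b : ι}

lemma exponentDiff_surjective (hab : a ≠ b) (ha : o ≠ a) (hb : o ≠ b) :
    Function.Surjective (exponentDiff n t o a b) := fun z ↦
  ⟨gen n t o a ^ z.toAdd, by
    simp [exponentDiff_gen, hab.symm, ha.symm, hb.symm, ← ofAdd_zsmul]⟩

theorem isFinitelyPresented_ker_exponentDiff (ht : Function.Injective t)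
    (hk : Function.Surjective (algebraMap ℤ k)) (hn : 2 * n + 3 ≤ Fintype.card ι) (hab : a ≠ b)
    (ha : o ≠ a) (hb : o ≠ b) : Group.IsFinitelyPresented (exponentDiff n t o a b).ker := by
  have hcard : Fintype.card {i // i ≠ a ∧ i ≠ b} = Fintype.card ι - 2 := by
    rw [Fintype.card_subtype, ← Finset.card_pair hab, ← Finset.card_compl]
    congr 1
    ext i
    simp
  refine (spanningFamily o ht hk).isFinitelyPresented_ker (a := a) (b := b)
    (scalarConjugation n t o) (by lia) ⟨o, ha, hb, gen_self⟩ (fun i hia hib ↦ ?_) ?_ ?_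
  · simp [exponentDiff_gen, hia.symm, hib.symm, ha.symm, hb.symm]
  · simp [exponentDiff_gen, ha.symm, hb.symm, hab, hab.symm]
  · have hone : exponentDiff n t o a b (gen n t o a) = .ofAdd 1 := by
      simp [exponentDiff_gen, ha.symm, hb.symm, hab.symm]
    rw [hone, orderOf_eq_zero_iff']
    intro d hd
    simp [← ofAdd_nsmul, hd.ne']

end momentGroup

end FinitePresentation

/-! ### Failure of type `FP₃` -/

section NotFP3

open MvPolynomial (C eval₂Hom)
open scoped commutatorElement

lemma prod_sub_pow_mul_of_isPrimitiveRoot_three {E : Type*} [CommRing E] [IsDomain E] {ω : E}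
    (hω : IsPrimitiveRoot ω 3) (x y : E) : ∏ l : Fin 3, (x - ω ^ (l : ℕ) * y) = x ^ 3 - y ^ 3 := by
  have hsum := hω.geom_sum_eq_zero (by norm_num)
  simp only [Finset.sum_range_succ, Finset.range_zero, Finset.sum_empty] at hsum
  simp only [Fin.prod_univ_three, Fin.isValue, Fin.val_zero, Fin.val_one, Fin.val_two]
  linear_combination (-x ^ 2 * y + ω * x * y ^ 2) * hsum - y ^ 3 * hω.pow_eq_one

lemma prod_pow_sub_of_isPrimitiveRoot_three {E : Type*} [CommRing E] [IsDomain E] {ω : E}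
    (hω : IsPrimitiveRoot ω 3) (y : E) : ∏ l : Fin 3, (ω ^ (l : ℕ) - y) = 1 - y ^ 3 := by
  have h := prod_sub_pow_mul_of_isPrimitiveRoot_three hω y 1
  simp only [Fin.prod_univ_three] at h ⊢
  linear_combination -h

variable {k : Type*} [Field k] {ζ : k}

lemma ratFunc_C_sub_C_mul_X_ne_zero {s : k} (hs : s ≠ 0) (a : k) :
    RatFunc.C s - RatFunc.C a * RatFunc.X ≠ 0 := by
  have h : (Polynomial.C s - Polynomial.C a * Polynomial.X : Polynomial k) ≠ 0 := fun h0 ↦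
    hs (by simpa using congrArg (Polynomial.coeff · 0) h0)
  simpa using (map_ne_zero_iff _ (RatFunc.algebraMap_injective k)).2 h

lemma ratFunc_one_sub_C_pow_mul_X_ne_zero (a : k) (n : ℕ) :
    1 - RatFunc.C a ^ n * RatFunc.X ≠ 0 := by
  simpa only [map_one, map_pow] using ratFunc_C_sub_C_mul_X_ne_zero one_ne_zero (a ^ n)

lemma ratFunc_one_sub_X_cube_pow_injective :
    Function.Injective fun n : ℕ ↦ (1 - RatFunc.X ^ 3 : RatFunc k) ^ n := by
  have hdeg : (1 - Polynomial.X ^ 3 : Polynomial k).natDegree = 3 := by compute_degree!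
  have hpow (n : ℕ) : (1 - RatFunc.X ^ 3 : RatFunc k) ^ n =
      algebraMap (Polynomial k) _ ((1 - Polynomial.X ^ 3) ^ n) := by simp
  intro m n h
  simp only [hpow] at h
  have := congrArg Polynomial.natDegree (RatFunc.algebraMap_injective k h)
  simp only [Polynomial.natDegree_pow, hdeg] at this
  lia

lemma ratFunc_one_sub_X_cube_ne_zero : (1 - RatFunc.X ^ 3 : RatFunc k) ≠ 0 := fun h ↦ by
  simpa using ratFunc_one_sub_X_cube_pow_injective (k := k)
    (show (1 - RatFunc.X ^ 3 : RatFunc k) ^ 1 = (1 - RatFunc.X ^ 3) ^ 2 by rw [h]; simp)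

lemma eval₂Hom_momentForm_four (a s : k) :
    eval₂Hom RatFunc.C ![-(RatFunc.C a * RatFunc.X), 0, 0, 1] (momentForm 4 s) =
      RatFunc.C (s ^ 3) - RatFunc.C a * RatFunc.X := by
  simp only [momentForm, Fin.sum_univ_four]
  simp [neg_add_eq_sub]

lemma isPrimitiveRoot_ratFunc_C_cube (hζ : IsPrimitiveRoot ζ 9) :
    IsPrimitiveRoot (RatFunc.C (ζ ^ 3)) 3 :=
  (hζ.pow (by norm_num) (by norm_num)).map_of_injective (RatFunc.C (K := k)).injective

/-- The powers `1, ζ, …, ζ⁸`, at which the linear forms of the moment ring are taken. -/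
def powNodes (ζ : k) (i : Fin 9) : k := ζ ^ (i : ℕ)

lemma powNodes_injective (hζ : IsPrimitiveRoot ζ 9) : Function.Injective (powNodes ζ) :=
  fun i j h ↦ Fin.ext (hζ.pow_inj i.2 j.2 h)

lemma powNodes_cube (ζ : k) (i : Fin 9) : powNodes ζ i ^ 3 = (ζ ^ 3) ^ (i : ℕ) := by
  rw [powNodes, pow_right_comm]

lemma eval₂Hom_momentForm_powNodes_ne_zero (hζ : IsPrimitiveRoot ζ 9) (a : k) (i : Fin 9) :
    eval₂Hom RatFunc.C ![-(RatFunc.C a * RatFunc.X), 0, 0, 1]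
      (momentForm 4 (powNodes ζ i)) ≠ 0 := by
  rw [eval₂Hom_momentForm_four]
  exact ratFunc_C_sub_C_mul_X_ne_zero (pow_ne_zero _ (pow_ne_zero _ (hζ.ne_zero (by norm_num)))) a

variable (hζ : IsPrimitiveRoot ζ 9)

/-- The specialisation `X ↦ (-ωˡ c, 0, 0, 1)` of the moment ring in the function field `k(c)`, where
`ω` is the cube root of unity `ζ ^ 3`. -/
noncomputable def specialization (l : Fin 3) : MomentRing 3 (powNodes ζ) →+* RatFunc k :=
  MomentRing.lift (eval₂Hom_momentForm_powNodes_ne_zero hζ ((ζ ^ 3) ^ (l : ℕ)))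

lemma specialization_unit (l : Fin 3) (i : Fin 9) :
    specialization hζ l (MomentRing.unit 3 (powNodes ζ) i) =
      RatFunc.C (ζ ^ 3) ^ (i : ℕ) - RatFunc.C (ζ ^ 3) ^ (l : ℕ) * RatFunc.X := by
  rw [MomentRing.coe_unit, specialization, MomentRing.lift_algebraMap, eval₂Hom_momentForm_four,
    powNodes_cube, map_pow, map_pow _ (ζ ^ 3) (l : ℕ)]

lemma prod_specialization_unit (i : Fin 9) :
    ∏ l, specialization hζ l (MomentRing.unit 3 (powNodes ζ) i) = 1 - RatFunc.X ^ 3 := by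
  have hω := isPrimitiveRoot_ratFunc_C_cube hζ
  simp only [specialization_unit]
  rw [prod_sub_pow_mul_of_isPrimitiveRoot_three hω, pow_right_comm, hω.pow_eq_one, one_pow]

lemma prod_specialization_unit_three (l : Fin 3) :
    ∏ i : Fin 3, specialization hζ l (MomentRing.unit 3 (powNodes ζ) (i.castLE (by norm_num))) =
      1 - RatFunc.X ^ 3 := by
  have hω := isPrimitiveRoot_ratFunc_C_cube hζ
  simp only [specialization_unit, Fin.val_castLE]
  rw [prod_pow_sub_of_isPrimitiveRoot_three hω, mul_pow, pow_right_comm, hω.pow_eq_one, one_pow,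
    one_mul]

namespace momentGroup

lemma prod_specialization_scalar (g : momentGroup 3 (powNodes ζ) 0) :
    ∏ l, specialization hζ l (scalar 3 (powNodes ζ) 0 g) = 1 := by
  let χ (l : Fin 3) : momentGroup 3 (powNodes ζ) 0 →* (RatFunc k)ˣ :=
    (Units.map (specialization hζ l : _ →* RatFunc k)).comp (scalar 3 (powNodes ζ) 0)
  have hχ : ∏ l, χ l = 1 := MonoidHom.eq_of_eqOn_dense closure_range_gen <| by
    rintro _ ⟨i, rfl⟩
    have hunit (j : Fin 9) : ∏ l, Units.map (specialization hζ l : _ →* RatFunc k)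
        (MomentRing.unit 3 (powNodes ζ) j) =
          Units.mk0 (1 - RatFunc.X ^ 3) ratFunc_one_sub_X_cube_ne_zero := by
      ext
      simpa using prod_specialization_unit hζ j
    simp only [MonoidHom.finsetProd_apply, χ, MonoidHom.comp_apply, scalar_gen, map_mul, map_inv,
      Finset.prod_mul_distrib, Finset.prod_inv_distrib, hunit, mul_inv_cancel,
      MonoidHom.one_apply]
  simpa [χ] using congrArg Units.val (DFunLike.congr_fun hχ g)

lemma specialization_scalar_gen (l : Fin 3) (i : Fin 9) :
    specialization hζ l (scalar 3 (powNodes ζ) 0 (gen 3 (powNodes ζ) 0 i)) =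
      (RatFunc.C (ζ ^ 3) ^ (i : ℕ) - RatFunc.C (ζ ^ 3) ^ (l : ℕ) * RatFunc.X) /
        (1 - RatFunc.C (ζ ^ 3) ^ (l : ℕ) * RatFunc.X) := by
  rw [scalar_gen, Units.val_mul, map_mul, map_units_inv, specialization_unit, specialization_unit,
    Fin.val_zero, pow_zero, div_eq_mul_inv]

lemma specialization_shift_gen_zero (l : Fin 3) (i : Fin 9) :
    specialization hζ l (shift 3 (powNodes ζ) 0 (gen 3 (powNodes ζ) 0 i) 0) =
      RatFunc.C (ζ ^ (i : ℕ) - 1) / (1 - RatFunc.C (ζ ^ 3) ^ (l : ℕ) * RatFunc.X) := by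
  have hshift : shift 3 (powNodes ζ) 0 (gen 3 (powNodes ζ) 0 i) 0 =
      algebraMap (MvPolynomial (Fin 4) k) _ (C (powNodes ζ i ^ 1 - powNodes ζ 0 ^ 1)) *
        ↑(MomentRing.unit 3 (powNodes ζ) 0)⁻¹ := rfl
  rw [hshift, map_mul, map_units_inv, specialization_unit, Fin.val_zero, pow_zero, div_eq_mul_inv]
  simp [specialization, powNodes]

lemma specialization_shift_commutator_zero (l : Fin 3) :
    specialization hζ l (shift 3 (powNodes ζ) 0
      ⁅gen 3 (powNodes ζ) 0 1, gen 3 (powNodes ζ) 0 2⁆ 0) =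
      RatFunc.C ((ζ ^ 3 - 1) * (ζ - 1) * (ζ - ζ ^ 3)) /
        (1 - RatFunc.C (ζ ^ 3) ^ (l : ℕ) * RatFunc.X) ^ 2 := by
  rw [shift_commutator, Pi.sub_apply, Pi.smul_apply, Pi.smul_apply, smul_eq_mul, smul_eq_mul,
    map_sub, map_mul, map_mul, map_sub, map_sub, map_one]
  simp only [specialization_scalar_gen, specialization_shift_gen_zero]
  have hne := ratFunc_one_sub_C_pow_mul_X_ne_zero (ζ ^ 3) l
  field_simp
  simp only [Fin.val_one, Fin.val_two, map_mul, map_sub, map_pow, map_one]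
  ring

lemma specialization_shift_commutator_zero_ne_zero (l : Fin 3) :
    specialization hζ l (shift 3 (powNodes ζ) 0
      ⁅gen 3 (powNodes ζ) 0 1, gen 3 (powNodes ζ) 0 2⁆ 0) ≠ 0 := by
  have hζ0 : ζ ≠ 0 := hζ.ne_zero (by norm_num)
  have h1 : ζ - 1 ≠ 0 := sub_ne_zero.2 (hζ.ne_one (by norm_num))
  have h2 : ζ ^ 2 - 1 ≠ 0 := sub_ne_zero.2 (hζ.pow_ne_one_of_pos_of_lt (by norm_num) (by norm_num))
  have h3 : ζ ^ 3 - 1 ≠ 0 := sub_ne_zero.2 (hζ.pow_ne_one_of_pos_of_lt (by norm_num) (by norm_num))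
  have hfactor : (ζ ^ 3 - 1) * (ζ - 1) * (ζ - ζ ^ 3) =
      -((ζ ^ 3 - 1) * (ζ - 1) * (ζ * (ζ ^ 2 - 1))) := by ring
  rw [specialization_shift_commutator_zero, hfactor]
  refine div_ne_zero ((map_ne_zero _).2 ?_)
    (pow_ne_zero 2 (ratFunc_one_sub_C_pow_mul_X_ne_zero _ _))
  exact neg_ne_zero.2 (mul_ne_zero (mul_ne_zero h3 h1) (mul_ne_zero hζ0 h2))

end momentGroup

/-- The product of the fractions `X_{f i} / Lᵢ` for `i = 0, 1, 2`, whose denominator every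
`specialization` sends to `1 - c ^ 3`. -/
noncomputable def coordFraction (ζ : k) (f : Fin 3 → Fin 4) : MomentRing 3 (powNodes ζ) :=
  ∏ i : Fin 3, MomentRing.coord 3 (powNodes ζ) (f i) *
    ↑(MomentRing.unit 3 (powNodes ζ) (i.castLE (by norm_num)))⁻¹

lemma specialization_coordFraction (l : Fin 3) (f : Fin 3 → Fin 4) :
    specialization hζ l (coordFraction ζ f) =
      (∏ i, specialization hζ l (MomentRing.coord 3 (powNodes ζ) (f i))) / (1 - RatFunc.X ^ 3) := by
  simp only [coordFraction, map_prod, map_mul, map_units_inv, Finset.prod_mul_distrib,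
    Finset.prod_inv_distrib, prod_specialization_unit_three, div_eq_mul_inv]

lemma specialization_coordFraction_three (l : Fin 3) :
    specialization hζ l (coordFraction ζ fun _ ↦ 3) = (1 - RatFunc.X ^ 3)⁻¹ := by
  rw [specialization_coordFraction]
  simp [specialization]

lemma specialization_coordFraction_zero_three_three (l : Fin 3) :
    specialization hζ l (coordFraction ζ ![0, 3, 3]) =
      -(RatFunc.C (ζ ^ 3) ^ (l : ℕ) * RatFunc.X) / (1 - RatFunc.X ^ 3) := by
  rw [specialization_coordFraction]
  simp [specialization, Fin.prod_univ_three]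

lemma specialization_coordFraction_zero_three_three_injective :
    Function.Injective fun l ↦ specialization hζ l (coordFraction ζ ![0, 3, 3]) := by
  intro l l' h
  simp only [specialization_coordFraction_zero_three_three] at h
  have hpow := mul_right_cancel₀ RatFunc.X_ne_zero
    (neg_injective ((div_left_inj' ratFunc_one_sub_X_cube_ne_zero).1 h))
  exact Fin.ext ((isPrimitiveRoot_ratFunc_C_cube hζ).pow_inj l.2 l'.2 hpow)

namespace momentGroup

lemma exists_mem_ker_exponent_specialization_shift (hk : Function.Surjective (algebraMap ℤ k))
    (n j : ℕ) : ∃ m ∈ (exponent 3 (powNodes ζ) 0).ker, ∀ l,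
      specialization hζ l (shift 3 (powNodes ζ) 0 m 0) =
        (specialization hζ l (shift 3 (powNodes ζ) 0
          ⁅gen 3 (powNodes ζ) 0 1, gen 3 (powNodes ζ) 0 2⁆ 0) * (1 - RatFunc.X ^ 3)⁻¹ ^ n) *
        specialization hζ l (coordFraction ζ ![0, 3, 3]) ^ j := by
  have hmem (f : Fin 3 → Fin 4) : coordFraction ζ f ∈ Subring.closure
      (Set.range fun g ↦ (scalar 3 (powNodes ζ) 0 g : MomentRing 3 (powNodes ζ))) :=
    Subring.prod_mem _ fun i _ ↦
      coord_mul_inv_unit_mem_closure (powNodes_injective hζ) hk (by simp) _ _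
  have hcomm : ⁅gen 3 (powNodes ζ) 0 1, gen 3 (powNodes ζ) 0 2⁆ ∈ (exponent 3 (powNodes ζ) 0).ker :=
    Abelianization.commutator_subset_ker _
      (Subgroup.commutator_mem_commutator (Subgroup.mem_top _) (Subgroup.mem_top _))
  obtain ⟨m, hm, hshift⟩ := (scalarConjugation 3 (powNodes ζ) 0).exists_mem_map_eq_smul hcomm
    (mul_mem (pow_mem (hmem fun _ ↦ 3) n) (pow_mem (hmem ![0, 3, 3]) j))
  refine ⟨m, hm, fun l ↦ ?_⟩
  rw [hshift, Pi.smul_apply, smul_eq_mul, map_mul, map_mul, map_pow, map_pow,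
    specialization_coordFraction_three]
  ring

lemma exists_det_specialization_shift (hk : Function.Surjective (algebraMap ℤ k)) :
    ∃ z : RatFunc k, z ≠ 0 ∧ ∀ n : ℕ, ∃ m : Fin 3 → momentGroup 3 (powNodes ζ) 0,
      (∀ j, m j ∈ (exponent 3 (powNodes ζ) 0).ker) ∧
      (Matrix.of fun l j ↦ specialization hζ l (shift 3 (powNodes ζ) 0 (m j) 0)).det =
        ((1 - RatFunc.X ^ 3) ^ (n * 3))⁻¹ * z := by
  let W (l : Fin 3) := specialization hζ l (shift 3 (powNodes ζ) 0
    ⁅gen 3 (powNodes ζ) 0 1, gen 3 (powNodes ζ) 0 2⁆ 0)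
  let y (l : Fin 3) := specialization hζ l (coordFraction ζ ![0, 3, 3])
  refine ⟨(∏ l, W l) * (Matrix.vandermonde y).det, mul_ne_zero
    (Finset.prod_ne_zero_iff.2 fun l _ ↦ specialization_shift_commutator_zero_ne_zero hζ l)
    (Matrix.det_vandermonde_ne_zero_iff.2
      (specialization_coordFraction_zero_three_three_injective hζ)), fun n ↦ ?_⟩
  choose m hm hshift using fun j : Fin 3 ↦ exists_mem_ker_exponent_specialization_shift hζ hk n j
  refine ⟨m, hm, ?_⟩
  have hmatrix : (Matrix.of fun l j ↦ specialization hζ l (shift 3 (powNodes ζ) 0 (m j) 0)) =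
      Matrix.of fun l j ↦ (W l * (1 - RatFunc.X ^ 3)⁻¹ ^ n) * Matrix.vandermonde y l j := by
    ext l j
    simp only [Matrix.of_apply, hshift, Matrix.vandermonde_apply, W, y]
  rw [hmatrix, Matrix.det_mul_column, Finset.prod_mul_distrib, Finset.prod_const, Finset.card_univ,
    Fintype.card_fin, ← pow_mul, inv_pow]
  ring

theorem not_isTypeFP3 {k : Type} [Field k] (p : ℕ) [NeZero p] [CharP k p] {ζ : k}
    (hζ : IsPrimitiveRoot ζ 9) (hk : Function.Surjective (algebraMap ℤ k))
    {H : Subgroup (momentGroup 3 (powNodes ζ) 0)} (hH : (exponent 3 (powNodes ζ) 0).ker ≤ H) :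
    ¬ IsTypeFP3 H := by
  intro hFP
  let χ (l : Fin 3) : H →* RatFunc k := (specialization hζ l : _ →* RatFunc k).comp
    ((Units.coeHom _).comp ((scalar 3 (powNodes ζ) 0).comp H.subtype))
  have hχ : ∏ l, χ l = 1 := MonoidHom.ext fun g ↦ by
    simpa [χ, MonoidHom.finsetProd_apply] using prod_specialization_scalar hζ g.1
  have hcrossed (l : Fin 3) :
      IsCrossedHom (χ l) fun g ↦ specialization hζ l (shift 3 (powNodes ζ) 0 g.1 0) := fun g h ↦ by
    simp [χ, shift_mul]
  obtain ⟨N, hN, hdet⟩ := exists_fg_forall_det_mem_of_isTypeFP3 hFP hχ hcrossed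
  obtain ⟨z, hz, hm⟩ := exists_det_specialization_shift hζ hk
  have hmem (n : ℕ) : ((1 - RatFunc.X ^ 3) ^ (n * 3))⁻¹ * z ∈ N := by
    obtain ⟨m, hmker, hdetm⟩ := hm n
    rw [← hdetm]
    refine hdet (fun j ↦ ⟨m j, hH (hmker j)⟩) (fun i j ↦ Subtype.ext ?_) fun l j ↦ ?_
    · have := (scalarConjugation 3 (powNodes ζ) 0).isMulCommutative
      exact setLike_mul_comm (hmker i) (hmker j)
    · simp [χ, scalar_eq, MonoidHom.mem_ker.1 (hmker j)]
  have : CharP (RatFunc k) p := charP_of_injective_ringHom (RatFunc.C (K := k)).injective p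
  have : Finite N := finite_of_fg_of_charP p hN
  refine Set.infinite_of_injective_forall_mem (fun n n' h ↦ ?_) hmem
    (Set.toFinite (N : Set (RatFunc k)))
  have := ratFunc_one_sub_X_cube_pow_injective (inv_injective (mul_right_cancel₀ hz h))
  lia

end momentGroup

end NotFP3

lemma isPrimitiveRoot_four_zmod_nineteen : IsPrimitiveRoot (4 : ZMod 19) 9 :=
  .mk_of_lt 4 (by norm_num) (by decide) fun l hl hl9 ↦ by interval_cases l <;> decide

/-- There is a finitely presented group `G` with no Baumslag–Solitar subgroups
(in particular no `ℤ × ℤ` subgroup) and a surjection `φ : G → ℤ` whose kernel is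
finitely presented but not of type `FP₃` over `ℤ`. -/
theorem exists_fp_group_with_finitelyPresented_not_FP3_kernel :
    ∃ (G : Type) (_ : Group G),
      IsFinitelyPresented G ∧
      HasNoBSSubgroup G ∧
      (∀ K : Subgroup G, ¬ Nonempty (K ≃* Multiplicative (ℤ × ℤ))) ∧
      ∃ φ : G →* Multiplicative ℤ,
        Function.Surjective φ ∧
        IsFinitelyPresented φ.ker ∧
        ¬ IsTypeFP3 φ.ker := by
  have : Fact (Nat.Prime 19) := ⟨by norm_num⟩
  have hζ := isPrimitiveRoot_four_zmod_nineteen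
  let t := powNodes (4 : ZMod 19)
  have ht : Function.Injective t := powNodes_injective hζ
  have hk : Function.Surjective (algebraMap ℤ (ZMod 19)) := ZMod.intCast_surjective
  have hG : Group.IsFinitelyPresented (momentGroup 3 t 0) :=
    momentGroup.isFinitelyPresented ht hk (by simp)
  have hdep : CommutingPairsDependent (momentGroup.exponent 3 t 0) :=
    momentGroup.commutingPairsDependent ht
  have hexp : ∀ g ∈ (momentGroup.exponent 3 t 0).ker, g ^ 19 = 1 := fun _ ↦
    momentGroup.pow_eq_one_of_mem_ker_exponent
  have hker : Group.IsFinitelyPresented (momentGroup.exponentDiff 3 t 0 7 8).ker :=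
    momentGroup.isFinitelyPresented_ker_exponentDiff ht hk (by simp) (by decide) (by decide)
      (by decide)
  exact ⟨momentGroup 3 t 0, inferInstance, hG.exists_mulEquiv_presentedGroup,
    hdep.hasNoBSSubgroup hexp, hdep.not_nonempty_mulEquiv_int_prod_int hexp,
    momentGroup.exponentDiff 3 t 0 7 8,
    momentGroup.exponentDiff_surjective (by decide) (by decide) (by decide),
    hker.exists_mulEquiv_presentedGroup,
    momentGroup.not_isTypeFP3 19 hζ hk (momentGroup.ker_exponent_le_ker_exponentDiff 7 8)⟩
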